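/- Let R be a Noetherian ring and 𝔞, 𝔟 ideals of R with 𝔟 ⊆ Rad(𝔞) and dim R/𝔞 = 1. If M is a 𝔟-cofinite R-module, then H^i_𝔞(M) is 𝔞-cofinite for all i ≥ 0. -/

import Mathlib

open CategoryTheory

universe u

variable (R : Type u) [CommRing R]

/-- The `i`-th Ext module `Ext^i_R(N, M)` of `R`-modules. -/
noncomputable def extModule (i : ℕ) (N M : ModuleCat.{u} R) : ModuleCat.{u} R :=
  ((Ext R (ModuleCat.{u} R) i).obj (Opposite.op N)).obj M

/-- A module is weakly Laskerian if every quotient has finitely many associated primes. -/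
def IsWeaklyLaskerian (M : Type u) [AddCommGroup M] [Module R M] : Prop :=
  ∀ N : Submodule R M, (associatedPrimes R (M ⧸ N)).Finite

/-- `M` is `𝔞`-cofinite: `Supp M ⊆ V(𝔞)` and all `Ext^i_R(R/𝔞, M)` are finitely generated. -/
def IsCofinite (𝔞 : Ideal R) (M : ModuleCat.{u} R) : Prop :=
  Module.support R M ⊆ PrimeSpectrum.zeroLocus (𝔞 : Set R) ∧
    ∀ i : ℕ, Module.Finite R (extModule R i (ModuleCat.of R (R ⧸ 𝔞)) M)

/-- `M` is `𝔞`-weakly cofinite: `Supp M ⊆ V(𝔞)` and all `Ext^i_R(R/𝔞, M)` are weakly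
Laskerian. -/
def IsWeaklyCofinite (𝔞 : Ideal R) (M : ModuleCat.{u} R) : Prop :=
  Module.support R M ⊆ PrimeSpectrum.zeroLocus (𝔞 : Set R) ∧
    ∀ i : ℕ, IsWeaklyLaskerian R (extModule R i (ModuleCat.of R (R ⧸ 𝔞)) M)

/-- The Krull dimension of the support of a module. -/
noncomputable def suppDim (M : Type u) [AddCommGroup M] [Module R M] : WithBot ℕ∞ :=
  Order.krullDim (Module.support R M)

/-- The cohomological dimension `cd(𝔞, M) = sup {i | H^i_𝔞(M) ≠ 0}`, as an element of `ℕ∞`. -/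
noncomputable def cohomologicalDim (𝔞 : Ideal R) (M : ModuleCat.{u} R) : ℕ∞ :=
  ⨆ i ∈ {i : ℕ | Nontrivial ((localCohomology 𝔞 i).obj M)}, (i : ℕ∞)

/-- `p` is an attached prime of `M`: `p` is prime and is the annihilator of a quotient
of `M`. -/
def IsAttachedPrime (M : Type u) [AddCommGroup M] [Module R M] (p : Ideal R) : Prop :=
  p.IsPrime ∧ ∃ N : Submodule R M, p = Module.annihilator R (M ⧸ N)

/-!
Call `N` *good* if all `Ext^i(R ⧸ a, N)` are finitely generated. Every module killed by a power of
`b` and finitely generated has a finite filtration with quotients `R ⧸ p`, `b ≤ p`, so goodness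
passes from `b` to any `a` with `b ≤ a.radical`.

The crux is that, when `dim R ⧸ a ≤ 1`, an `a`-power torsion module `N` is good as soon as `Ext^0`
and `Ext^1` are finitely generated. Inverting the elements outside the non-maximal primes above `a`
makes `N` Artinian, so some `x ∈ a` that does not kill `N` has `N ⧸ x N` finitely generated after
localization; before localization, `N ⧸ x N` is then an extension of an Artinian module by a
finitely generated one. The kernel of `x` is handled by Noetherian induction on the annihilator, and
`Ext(R ⧸ a, N)` is squeezed between the contributions of the kernel and the cokernel of `x` because
`x` kills it.

Applied to the torsion submodule `Γ_a(M)`, this makes `Γ_a(M)` and `M ⧸ Γ_a(M)` good when `M` is.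
The quotient has the same `H^{i + 1}_a` as `M`, and it embeds in an injective `E` with
`Γ_a(E) = 0`. All `Ext^i(R ⧸ a ^ t, E)` vanish, so the cokernel of that embedding is good and
its `H^i_a` is `H^{i + 1}_a(M)`.
-/

namespace CofiniteLocalCohomology

section ExtComparison

open Opposite

variable {R} {X X' : ModuleCat.{u} R}

/-- The map sending a cocycle of `Hom(P, Y)` to its class in the derived-functor `Ext`. -/
noncomputable def cocycleClass (P : ProjectiveResolution X) (n : ℕ) (Y : ModuleCat.{u} R) :
    (P.complex.linearYonedaObj R Y).cycles n ⟶ ((Ext R (ModuleCat.{u} R) n).obj (op X)).obj Y :=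
  (P.complex.linearYonedaObj R Y).homologyπ n ≫ (P.isoExt n Y).inv

lemma cocycleClass_surjective (P : ProjectiveResolution X) (n : ℕ) (Y : ModuleCat.{u} R) :
    Function.Surjective (cocycleClass P n Y) :=
  (ModuleCat.epi_iff_surjective _).1 (epi_comp _ _)

/-- The map of complexes `Hom(P', Y) ⟶ Hom(P, Y)` given by precomposition with `φ : P ⟶ P'`. -/
noncomputable def precompCochains {P : ProjectiveResolution X} {P' : ProjectiveResolution X'}
    (φ : P.complex ⟶ P'.complex) (Y : ModuleCat.{u} R) :
    P'.complex.linearYonedaObj R Y ⟶ P.complex.linearYonedaObj R Y :=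
  (HomologicalComplex.unopFunctor _ _).map
    ((((linearYoneda R (ModuleCat.{u} R)).obj Y).rightOp.mapHomologicalComplex
      (ComplexShape.down ℕ)).map φ).op

lemma isoExt_inv_naturality {P : ProjectiveResolution X} {P' : ProjectiveResolution X'}
    {g : X ⟶ X'} (φ : P.Hom P' g) (n : ℕ) (Y : ModuleCat.{u} R) :
    (P'.isoExt n Y).inv ≫ ((Ext R (ModuleCat.{u} R) n).map g.op).app Y =
      HomologicalComplex.homologyMap (precompCochains φ.hom Y) n ≫ (P.isoExt n Y).inv := by
  let F := ((linearYoneda R (ModuleCat.{u} R)).obj Y).rightOp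
  have derived : (P'.isoLeftDerivedObj F n).hom.unop ≫ ((F.leftDerived n).map g).unop =
      ((F.mapHomologicalComplex _ ⋙ HomologicalComplex.homologyFunctor _ _ n).map φ.hom).unop ≫
        (P.isoLeftDerivedObj F n).hom.unop :=
    congrArg Quiver.Hom.unop
      (P.isoLeftDerivedObj_hom_naturality g P' φ.hom φ.hom_f_zero_comp_π_f_zero F n)
  have homology := congrArg Quiver.Hom.unop
    (HomologicalComplex.homologyOp_hom_naturality (precompCochains φ.hom Y) n)
  refine (Category.assoc _ _ _).trans ?_
  refine (congrArg (_ ≫ ·) derived).trans ?_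
  refine (Category.assoc _ _ _).symm.trans ?_
  refine (congrArg (· ≫ _) homology).trans ?_
  exact Category.assoc _ _ _

lemma cocycleClass_naturality {P : ProjectiveResolution X} {P' : ProjectiveResolution X'}
    {g : X ⟶ X'} (φ : P.Hom P' g) (n : ℕ) (Y : ModuleCat.{u} R) :
    cocycleClass P' n Y ≫ ((Ext R (ModuleCat.{u} R) n).map g.op).app Y =
      HomologicalComplex.cyclesMap (precompCochains φ.hom Y) n ≫ cocycleClass P n Y := by
  rw [cocycleClass, cocycleClass, Category.assoc, isoExt_inv_naturality φ,
    HomologicalComplex.homologyπ_naturality_assoc]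

/-- The morphism `P_n ⟶ Y` underlying a cocycle of `Hom(P, Y)`. -/
noncomputable def cocycleHom (P : ProjectiveResolution X) (n : ℕ) (Y : ModuleCat.{u} R)
    (z : (P.complex.linearYonedaObj R Y).cycles n) : P.complex.X n ⟶ Y :=
  ((P.complex.linearYonedaObj R Y).iCycles n).hom z

lemma d_comp_cocycleHom (P : ProjectiveResolution X) (n : ℕ) (Y : ModuleCat.{u} R)
    (z : (P.complex.linearYonedaObj R Y).cycles n) :
    P.complex.d (n + 1) n ≫ cocycleHom P n Y z = 0 :=
  congrArg (fun f ↦ f.hom z) ((P.complex.linearYonedaObj R Y).iCycles_d n (n + 1))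

lemma cocycleHom_injective (P : ProjectiveResolution X) (n : ℕ) (Y : ModuleCat.{u} R) :
    Function.Injective (cocycleHom P n Y) :=
  (ModuleCat.mono_iff_injective ((P.complex.linearYonedaObj R Y).iCycles n)).1 inferInstance

lemma exists_cocycleHom_eq (P : ProjectiveResolution X) (n : ℕ) {Y : ModuleCat.{u} R}
    (f : P.complex.X n ⟶ Y) (hf : P.complex.d (n + 1) n ≫ f = 0) :
    ∃ z, cocycleHom P n Y z = f := by
  let K := P.complex.linearYonedaObj R Y
  let k : ModuleCat.of R R ⟶ K.X n := ModuleCat.ofHom (LinearMap.toSpanSingleton R (K.X n) f)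
  have hk : k ≫ K.d n (n + 1) = 0 := by
    ext
    exact (congrArg (K.d n (n + 1)).hom (one_smul R f)).trans hf
  exact ⟨(K.liftCycles k (n + 1) (by simp) hk).hom (1 : R),
    (congrArg (fun g ↦ g.hom (1 : R)) (K.liftCycles_i k (n + 1) (by simp) hk)).trans
      (one_smul R f)⟩

lemma cocycleHom_cyclesMap {P : ProjectiveResolution X} {P' : ProjectiveResolution X'}
    (φ : P.complex ⟶ P'.complex) (n : ℕ) (Y : ModuleCat.{u} R)
    (z : (P'.complex.linearYonedaObj R Y).cycles n) :
    cocycleHom P n Y ((HomologicalComplex.cyclesMap (precompCochains φ Y) n).hom z) =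
      φ.f n ≫ cocycleHom P' n Y z :=
  congrArg (fun f ↦ f.hom z) (HomologicalComplex.cyclesMap_i (precompCochains φ Y) n)

/-- The map sending a cocycle of `Hom(P, Y)` to its class in `Abelian.Ext X Y n`. -/
noncomputable def cocycleExtMk (P : ProjectiveResolution X) (n : ℕ) (Y : ModuleCat.{u} R) :
    (P.complex.linearYonedaObj R Y).cycles n →ₗ[R] Abelian.Ext X Y n where
  toFun z := P.extMk (cocycleHom P n Y z) (n + 1) rfl (d_comp_cocycleHom P n Y z)
  map_add' z w := by
    rw [P.add_extMk]
    congr 1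
    exact map_add ((P.complex.linearYonedaObj R Y).iCycles n).hom z w
  map_smul' r z := by
    rw [RingHom.id_apply, Abelian.Ext.smul_eq_comp_mk₀, P.extMk_comp_mk₀]
    congr 1
    refine (map_smul ((P.complex.linearYonedaObj R Y).iCycles n).hom r z).trans ?_
    rw [Linear.comp_smul, Category.comp_id]
    rfl

lemma cocycleExtMk_surjective (P : ProjectiveResolution X) (n : ℕ) (Y : ModuleCat.{u} R) :
    Function.Surjective (cocycleExtMk P n Y) := by
  intro α
  obtain ⟨f, hf, rfl⟩ := P.extMk_surjective α (n + 1) rfl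
  obtain ⟨z, rfl⟩ := exists_cocycleHom_eq P n f hf
  exact ⟨z, rfl⟩

open CochainComplex.HomComplex in
lemma extMk_zero_eq_zero_iff {Y : ModuleCat.{u} R} (P : ProjectiveResolution X)
    (f : P.complex.X 0 ⟶ Y) (hf : P.complex.d 1 0 ≫ f = 0) :
    P.extMk f 1 rfl hf = 0 ↔ f = 0 := by
  simp only [← P.extEquivCohomologyClass.apply_eq_iff_eq,
    ProjectiveResolution.extEquivCohomologyClass_extMk,
    ProjectiveResolution.extEquivCohomologyClass_zero, CohomologyClass.mk_eq_zero_iff]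
  rw [Cocycle.toSingleMk_mem_coboundaries_iff _ _ _ _ _ 1 (by simp)]
  have isZero : Limits.IsZero (P.cochainComplex.X 1) :=
    P.cochainComplex.isZero_of_isStrictlyLE 0 1 (by lia)
  constructor
  · rintro ⟨g, hg⟩
    rw [isZero.eq_of_src g 0, Limits.comp_zero] at hg
    rw [← cancel_epi (P.cochainComplexXIso (-(0 : ℕ)) 0 rfl).hom]
    simpa using hg.symm
  · rintro rfl
    exact ⟨0, by simp⟩

lemma cocycleClass_eq_zero_iff_exists (P : ProjectiveResolution X) {i n : ℕ}
    (hi : (ComplexShape.up ℕ).prev n = i) (Y : ModuleCat.{u} R)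
    (z : (P.complex.linearYonedaObj R Y).cycles n) :
    cocycleClass P n Y z = 0 ↔ ∃ y, (P.complex.linearYonedaObj R Y).toCycles i n y = z := by
  let K := P.complex.linearYonedaObj R Y
  have injective : Function.Injective (P.isoExt (R := R) n Y).inv :=
    (ModuleCat.mono_iff_injective _).1 inferInstance
  have exact := (ShortComplex.moduleCat_exact_iff _).1
    (ShortComplex.exact_of_g_is_cokernel
      (ShortComplex.mk _ _ (K.toCycles_comp_homologyπ i n)) (K.homologyIsCokernel i n hi))
  refine (map_eq_zero_iff (P.isoExt (R := R) n Y).inv.hom injective).trans ⟨exact z, ?_⟩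
  rintro ⟨y, rfl⟩
  exact congrArg (fun f ↦ f.hom y) (K.toCycles_comp_homologyπ i n)

lemma cocycleClass_eq_zero_iff (P : ProjectiveResolution X) (n : ℕ) (Y : ModuleCat.{u} R)
    (z : (P.complex.linearYonedaObj R Y).cycles n) :
    cocycleClass P n Y z = 0 ↔ cocycleExtMk P n Y z = 0 := by
  let K := P.complex.linearYonedaObj R Y
  change _ ↔ P.extMk (cocycleHom P n Y z) (n + 1) rfl (d_comp_cocycleHom P n Y z) = 0
  rcases n with _ | p
  · have zero : cocycleHom P 0 Y 0 = 0 := map_zero (K.iCycles 0).hom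
    rw [cocycleClass_eq_zero_iff_exists P (i := 0) (by simp), K.toCycles_eq_zero (by simp),
      extMk_zero_eq_zero_iff P _ (d_comp_cocycleHom P 0 Y z)]
    exact ⟨fun ⟨_, hz⟩ ↦ hz ▸ zero,
      fun h ↦ ⟨0, (cocycleHom_injective P 0 Y (h.trans zero.symm)).symm⟩⟩
  · have toCycles (y) : cocycleHom P (p + 1) Y (K.toCycles p (p + 1) y) = K.d p (p + 1) y :=
      congrArg (fun f ↦ f.hom y) (K.toCycles_i p (p + 1))
    rw [cocycleClass_eq_zero_iff_exists P (i := p) (by simp),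
      P.extMk_eq_zero_iff _ _ _ _ p rfl]
    refine exists_congr fun y ↦ ⟨?_, fun hy ↦ cocycleHom_injective P _ Y ((toCycles y).trans hy)⟩
    rintro rfl
    exact (toCycles y).symm

/-- The derived-functor `Ext` of `R`-modules agrees with `Abelian.Ext`. -/
noncomputable def extEquiv (n : ℕ) (X Y : ModuleCat.{u} R) :
    ((Ext R (ModuleCat.{u} R) n).obj (op X)).obj Y ≃ₗ[R] Abelian.Ext X Y n :=
  ((cocycleClass (projectiveResolution X) n Y).hom.quotKerEquivOfSurjective
      (cocycleClass_surjective _ n Y)).symm ≪≫ₗ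
    Submodule.quotEquivOfEq _ _ (Submodule.ext (cocycleClass_eq_zero_iff _ n Y)) ≪≫ₗ
    (cocycleExtMk (projectiveResolution X) n Y).quotKerEquivOfSurjective
      (cocycleExtMk_surjective _ n Y)

lemma extEquiv_cocycleClass (n : ℕ) (X Y : ModuleCat.{u} R)
    (z : ((projectiveResolution X).complex.linearYonedaObj R Y).cycles n) :
    extEquiv n X Y (cocycleClass (projectiveResolution X) n Y z) =
      cocycleExtMk (projectiveResolution X) n Y z := by
  have : ((cocycleClass (projectiveResolution X) n Y).hom.quotKerEquivOfSurjective
      (cocycleClass_surjective _ n Y)).symm (cocycleClass (projectiveResolution X) n Y z) =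
        Submodule.Quotient.mk z := by
    rw [LinearEquiv.symm_apply_eq]
    rfl
  rw [extEquiv, LinearEquiv.trans_apply, LinearEquiv.trans_apply, this]
  rfl

lemma extEquiv_naturality (n : ℕ) (g : X ⟶ X') (Y : ModuleCat.{u} R)
    (α : ((Ext R (ModuleCat.{u} R) n).obj (op X')).obj Y) :
    extEquiv n X Y ((((Ext R (ModuleCat.{u} R) n).map g.op).app Y).hom α) =
      (Abelian.Ext.mk₀ g).comp (extEquiv n X' Y α) (zero_add n) := by
  let P := projectiveResolution X
  let P' := projectiveResolution X'
  obtain ⟨z, rfl⟩ := cocycleClass_surjective P' n Y α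
  let φ : P.Hom P' g :=
    ⟨ProjectiveResolution.lift g P P', ProjectiveResolution.lift_commutes_zero g P P'⟩
  have natural := congrArg (fun f ↦ f.hom z) (cocycleClass_naturality φ n Y)
  refine (congrArg (extEquiv n X Y) natural).trans ((extEquiv_cocycleClass n X Y _).trans ?_)
  rw [extEquiv_cocycleClass]
  refine Eq.trans ?_ (ProjectiveResolution.mk₀_comp_extMk (cocycleHom P' n Y z) (n + 1) rfl
    (d_comp_cocycleHom P' n Y z) φ).symm
  change P.extMk (cocycleHom P n Y _) (n + 1) rfl (d_comp_cocycleHom P n Y _) = _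
  congr 1
  exact cocycleHom_cyclesMap φ.hom n Y z

end ExtComparison

section FiniteExt

variable {R}

lemma finite_of_ker_le_range [IsNoetherianRing R] {U V W : Type*} [AddCommGroup U]
    [AddCommGroup V] [AddCommGroup W] [Module R U] [Module R V] [Module R W] (f : U →ₗ[R] V)
    (g : V →ₗ[R] W) (h : LinearMap.ker g ≤ LinearMap.range f) [Module.Finite R U]
    [Module.Finite R (LinearMap.range g)] : Module.Finite R V := by
  have : IsNoetherian R (LinearMap.ker g) := isNoetherian_of_le h
  have : Module.Finite R (V ⧸ LinearMap.ker g) := .equiv g.quotKerEquivRange.symm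
  exact .of_submodule_quotient (LinearMap.ker g)

/-- `Ext^i_R(X, N)` is finitely generated. -/
abbrev FiniteExt (R : Type u) [CommRing R] (X N : Type u) [AddCommGroup X] [Module R X]
    [AddCommGroup N] [Module R N] (i : ℕ) : Prop :=
  Module.Finite R (Abelian.Ext (ModuleCat.of R X) (ModuleCat.of R N) i)

/-- All the modules `Ext^i_R(R ⧸ a, N)` are finitely generated: the homological half of
`a`-cofiniteness. -/
def HasFiniteExt (a : Ideal R) (N : Type u) [AddCommGroup N] [Module R N] : Prop :=
  ∀ i, FiniteExt R (R ⧸ a) N i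

lemma shortExact_shortComplexOfCompEqZero {A B C : Type u} [AddCommGroup A] [AddCommGroup B]
    [AddCommGroup C] [Module R A] [Module R B] [Module R C] {f : A →ₗ[R] B} {g : B →ₗ[R] C}
    (hf : Function.Injective f) (hg : Function.Surjective g) (hfg : Function.Exact f g) :
    (ModuleCat.shortComplexOfCompEqZero f g hfg.linearMap_comp_eq_zero).ShortExact :=
  ModuleCat.shortComplex_shortExact _ hfg hf hg

/-- `Ext^0_R(X, Y)` is `Hom_R(X, Y)`. -/
noncomputable def extZeroEquiv (X Y : Type u) [AddCommGroup X] [Module R X] [AddCommGroup Y]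
    [Module R Y] : Abelian.Ext (ModuleCat.of R X) (ModuleCat.of R Y) 0 ≃ₗ[R] (X →ₗ[R] Y) :=
  Abelian.Ext.linearEquiv₀ ≪≫ₗ ModuleCat.homLinearEquiv

namespace FiniteExt

section LongExactSequence

variable [IsNoetherianRing R] {A B C X Y : Type u} [AddCommGroup A] [AddCommGroup B]
  [AddCommGroup C] [AddCommGroup X] [AddCommGroup Y] [Module R A] [Module R B] [Module R C]
  [Module R X] [Module R Y] {f : A →ₗ[R] B} {g : B →ₗ[R] C} {i : ℕ}
  (hf : Function.Injective f) (hg : Function.Surjective g) (hfg : Function.Exact f g)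

include hf hg hfg

lemma covariant₁ (hC : FiniteExt R X C i) (hB : FiniteExt R X B (i + 1)) :
    FiniteExt R X A (i + 1) := by
  have hS := shortExact_shortComplexOfCompEqZero hf hg hfg
  exact finite_of_ker_le_range (hS.extClass.postcompOfLinear R (ModuleCat.of R X) rfl)
    ((Abelian.Ext.mk₀ (ModuleCat.ofHom f)).postcompOfLinear R (ModuleCat.of R X) (add_zero (i + 1)))
    fun α hα ↦ Abelian.Ext.covariant_sequence_exact₁ _ hS α hα rfl

lemma covariant₂ (_ : FiniteExt R X A i) (_ : FiniteExt R X C i) : FiniteExt R X B i :=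
  finite_of_ker_le_range
    ((Abelian.Ext.mk₀ (ModuleCat.ofHom f)).postcompOfLinear R (ModuleCat.of R X) (add_zero i))
    ((Abelian.Ext.mk₀ (ModuleCat.ofHom g)).postcompOfLinear R (ModuleCat.of R X) (add_zero i))
    fun α hα ↦ Abelian.Ext.covariant_sequence_exact₂ _
      (shortExact_shortComplexOfCompEqZero hf hg hfg) α hα

lemma covariant₃ (hB : FiniteExt R X B i) (hA : FiniteExt R X A (i + 1)) :
    FiniteExt R X C i := by
  have hS := shortExact_shortComplexOfCompEqZero hf hg hfg
  exact finite_of_ker_le_range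
    ((Abelian.Ext.mk₀ (ModuleCat.ofHom g)).postcompOfLinear R (ModuleCat.of R X) (add_zero i))
    (hS.extClass.postcompOfLinear R (ModuleCat.of R X) rfl)
    fun α hα ↦ Abelian.Ext.covariant_sequence_exact₃ _ hS α rfl hα

lemma contravariant₂ (_ : FiniteExt R A Y i) (_ : FiniteExt R C Y i) : FiniteExt R B Y i :=
  finite_of_ker_le_range
    ((Abelian.Ext.mk₀ (ModuleCat.ofHom g)).precompOfLinear R (ModuleCat.of R Y) (zero_add i))
    ((Abelian.Ext.mk₀ (ModuleCat.ofHom f)).precompOfLinear R (ModuleCat.of R Y) (zero_add i))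
    fun α hα ↦ Abelian.Ext.contravariant_sequence_exact₂
      (shortExact_shortComplexOfCompEqZero hf hg hfg) _ α hα

lemma contravariant₃ (hA : FiniteExt R A Y i) (hB : FiniteExt R B Y (i + 1)) :
    FiniteExt R C Y (i + 1) := by
  have hS := shortExact_shortComplexOfCompEqZero hf hg hfg
  exact finite_of_ker_le_range
    (hS.extClass.precompOfLinear R (ModuleCat.of R Y) (add_comm 1 i))
    ((Abelian.Ext.mk₀ (ModuleCat.ofHom g)).precompOfLinear R (ModuleCat.of R Y) (zero_add (i + 1)))
    fun α hα ↦ Abelian.Ext.contravariant_sequence_exact₃ hS _ α hα (add_comm 1 i)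

end LongExactSequence

variable {A B X Y : Type u} [AddCommGroup A] [AddCommGroup B] [AddCommGroup X] [AddCommGroup Y]
  [Module R A] [Module R B] [Module R X] [Module R Y] {i : ℕ}

lemma zero_iff : FiniteExt R X Y 0 ↔ Module.Finite R (X →ₗ[R] Y) :=
  Module.Finite.equiv_iff (extZeroEquiv X Y)

lemma zero_of_surjective [IsNoetherianRing R] (g : A →ₗ[R] B) (hg : Function.Surjective g)
    (h : FiniteExt R A Y 0) : FiniteExt R B Y 0 := by
  rw [zero_iff] at *
  exact .of_injective (LinearMap.lcomp R Y g) (LinearMap.lcomp_injective_of_surjective g hg)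

lemma of_subsingleton_left [Subsingleton X] : FiniteExt R X Y i := by
  have isZero : Limits.IsZero (ModuleCat.of R X) := ModuleCat.isZero_of_subsingleton _
  have : Subsingleton (Abelian.Ext (ModuleCat.of R X) (ModuleCat.of R Y) i) :=
    subsingleton_of_forall_eq 0 fun α ↦ by
      rw [← Abelian.Ext.mk₀_id_comp α, isZero.eq_of_src (𝟙 _) 0, Abelian.Ext.mk₀_zero,
        Abelian.Ext.zero_comp]
  infer_instance

lemma of_equiv_left (e : A ≃ₗ[R] B) (h : FiniteExt R A Y i) : FiniteExt R B Y i := by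
  refine Module.Finite.of_surjective ((Abelian.Ext.mk₀ e.toModuleIso.inv).precompOfLinear R
    (ModuleCat.of R Y) (zero_add i)) fun α ↦
      ⟨(Abelian.Ext.mk₀ e.toModuleIso.hom).comp α (zero_add i), ?_⟩
  exact (Abelian.Ext.mk₀_comp_mk₀_assoc _ _ _).trans (by
    rw [Iso.inv_hom_id, Abelian.Ext.mk₀_id_comp])

lemma of_equiv_right (e : A ≃ₗ[R] B) (h : FiniteExt R X A i) : FiniteExt R X B i := by
  refine Module.Finite.of_surjective ((Abelian.Ext.mk₀ e.toModuleIso.hom).postcompOfLinear R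
    (ModuleCat.of R X) (add_zero i)) fun α ↦
      ⟨α.comp (Abelian.Ext.mk₀ e.toModuleIso.inv) (add_zero i), ?_⟩
  change (Abelian.Ext.comp _ _ _).comp (Abelian.Ext.mk₀ _) (add_zero i) = _
  rw [Abelian.Ext.comp_assoc_of_second_deg_zero, Abelian.Ext.mk₀_comp_mk₀, Iso.inv_hom_id,
    Abelian.Ext.comp_mk₀_id]

/-- Over a filtration of `N` by quotients `R ⧸ p` with `b ≤ p`, compare `R ⧸ p` with `R ⧸ b`. -/
theorem of_pow_le_annihilator [IsNoetherianRing R] {b : Ideal R} {M : Type u} [AddCommGroup M]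
    [Module R M] {j : ℕ} (h : ∀ i ≤ j, FiniteExt R (R ⧸ b) M i) {N : Type u} [AddCommGroup N]
    [Module R N] [hN : Module.Finite R N] {n : ℕ} (hbN : b ^ n ≤ Module.annihilator R N) :
    FiniteExt R N M j := by
  induction j using Nat.strong_induction_on generalizing N n with | _ j ih
  induction hN using IsNoetherianRing.induction_on_isQuotientEquivQuotientPrime R with
  | subsingleton N => exact of_subsingleton_left
  | quotient N p e =>
    have hbp : b ≤ p.1 := p.2.le_of_pow_le (n := n) <| by
      rwa [e.annihilator_eq, Ideal.annihilator_quotient] at hbN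
    let g : (R ⧸ b) →ₗ[R] (R ⧸ p.1) := Submodule.factor hbp
    have hg : Function.Surjective g := Submodule.factor_surjective hbp
    refine of_equiv_left e.symm ?_
    rcases j with _ | j
    · exact zero_of_surjective g hg (h 0 le_rfl)
    · have hker : b ^ 1 ≤ Module.annihilator R (LinearMap.ker g) :=
        (pow_one b).trans_le <| Ideal.annihilator_quotient.ge.trans <|
          LinearMap.annihilator_le_of_injective _ (Submodule.injective_subtype _)
      exact contravariant₃ (Submodule.injective_subtype _) hg (LinearMap.exact_subtype_ker_map g)
        (ih j (by lia) (fun i hi ↦ h i (by lia)) hker) (h _ le_rfl)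
  | exact N₁ N₂ N₃ f g hf hg hfg h₁ h₃ =>
    exact contravariant₂ hf hg hfg (h₁ (hbN.trans (f.annihilator_le_of_injective hf)))
      (h₃ (hbN.trans (g.annihilator_le_of_surjective hg)))

end FiniteExt

end FiniteExt

section Artinian

lemma wellFoundedGT_nat_orderHom (α : Type*) [PartialOrder α] [WellFoundedGT α] :
    WellFoundedGT (ℕ →o α) := by
  refine wellFoundedGT_iff_monotone_chain_condition.2 fun f ↦ ?_
  have mono {k k' n n' : ℕ} (hk : k ≤ k') (hn : n ≤ n') : f k n ≤ f k' n' :=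
    (f.monotone hk n).trans ((f k').monotone hn)
  obtain ⟨d, diagonal⟩ := WellFoundedGT.monotone_chain_condition
    (⟨fun k ↦ f k k, fun _ _ h ↦ mono h h⟩ : ℕ →o α)
  choose c column using fun n ↦ WellFoundedGT.monotone_chain_condition
    (⟨fun k ↦ f k n, fun _ _ h ↦ mono h le_rfl⟩ : ℕ →o α)
  refine ⟨max d ((Finset.range d).sup c), fun m hm ↦ OrderHom.ext _ _ (funext fun n ↦ ?_)⟩
  rcases lt_or_ge n d with hn | hn
  · have hc : c n ≤ max d ((Finset.range d).sup c) :=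
      (Finset.le_sup (Finset.mem_range.2 hn)).trans (le_max_right _ _)
    exact (column n _ hc).symm.trans (column n m (hc.trans hm))
  · have eq_diagonal {k : ℕ} (hk : d ≤ k) : f k n = f d d :=
      ((mono (le_max_left k n) (le_max_right k n)).trans
        (diagonal _ (hk.trans (le_max_left k n))).ge).antisymm (mono hk hn)
    rw [eq_diagonal (le_max_left _ _), eq_diagonal ((le_max_left _ _).trans hm)]

variable {R : Type*} [CommRing R] {A : Type*} [AddCommGroup A] [Module R A]

open Submodule

lemma le_of_forall_map_pow_inf_torsionBy_le {x : R} (hx : ∀ y : A, ∃ n : ℕ, x ^ n • y = 0)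
    {N N' : Submodule R A} (hN : N' ≤ N)
    (h : ∀ n, N.map (LinearMap.lsmul R A (x ^ n)) ⊓ torsionBy R A x ≤
      N'.map (LinearMap.lsmul R A (x ^ n))) : N ≤ N' := by
  intro y hy
  obtain ⟨n, hn⟩ := hx y
  induction n generalizing y with
  | zero => simp_all
  | succ n ih =>
    obtain ⟨y', hy', eq⟩ := h n ⟨⟨y, hy, rfl⟩, by simpa [smul_smul, mul_comm, pow_succ] using hn⟩
    have sub_mem : y - y' ∈ N' :=
      ih (sub_mem hy (hN hy')) (by simpa [smul_sub, sub_eq_zero] using eq.symm)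
    simpa using add_mem sub_mem hy'

/-- The strictly monotone map `N ↦ (n ↦ x ^ n N ∩ ker x)` transports the descending chain
condition. -/
theorem isArtinian_of_torsionBy (x : R) (hx : ∀ y : A, ∃ n : ℕ, x ^ n • y = 0)
    [IsArtinian R (torsionBy R A x)] : IsArtinian R A := by
  let K := torsionBy R A x
  let chain (N : Submodule R A) : ℕ →o (Submodule R K)ᵒᵈ :=
    ⟨fun n ↦ .toDual ((N.map (LinearMap.lsmul R A (x ^ n))).comap K.subtype), by
      rintro n m hnm y ⟨l, hl, hy⟩
      refine ⟨x ^ (m - n) • l, N.smul_mem _ hl, ?_⟩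
      rw [← hy, LinearMap.lsmul_apply, smul_smul, ← pow_add, Nat.add_sub_cancel' hnm,
        LinearMap.lsmul_apply]⟩
  have strictMono : StrictMono fun N ↦ OrderDual.toDual (chain N) := fun N' N hlt ↦
    lt_of_le_not_ge (fun n ↦ Submodule.comap_mono (Submodule.map_mono hlt.le)) fun hge ↦
      hlt.not_ge <| le_of_forall_map_pow_inf_torsionBy_le hx hlt.le fun n y hy ↦
        hge n (show (⟨y, hy.2⟩ : K) ∈ _ from hy.1)
  have := wellFoundedGT_nat_orderHom (Submodule R K)ᵒᵈ
  exact ⟨strictMono.wellFoundedLT.wf⟩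

variable (A) in
/-- `A` is `I`-power torsion if every element is killed by a power of `I`, that is `Γ_I(A) = A`. -/
def IsPowerTorsion (I : Ideal R) : Prop :=
  ∀ y : A, ∃ n : ℕ, ∀ r ∈ I ^ n, r • y = 0

lemma isArtinian_of_torsionBySet_finset (s : Finset R)
    (hs : ∀ x ∈ s, ∀ y : A, ∃ n : ℕ, x ^ n • y = 0) [IsArtinian R (torsionBySet R A (s : Set R))] :
    IsArtinian R A := by
  classical
  induction s using Finset.induction generalizing A with
  | empty =>
    have : torsionBySet R A ((∅ : Finset R) : Set R) = ⊤ := by simp [eq_top_iff']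
    exact isArtinian_of_linearEquiv (Submodule.topEquiv.symm.trans (.ofEq _ _ this.symm)).symm
  | insert x s _ ih =>
    have : IsArtinian R (torsionBySet R (torsionBy R A x) (s : Set R)) := by
      let toTorsion : torsionBySet R (torsionBy R A x) (s : Set R) →ₗ[R]
          torsionBySet R A ((insert x s : Finset R) : Set R) :=
        ((torsionBy R A x).subtype ∘ₗ Submodule.subtype _).codRestrict _ fun y ↦ by
          rw [mem_torsionBySet_iff]
          rintro ⟨r, hr⟩
          rcases Finset.mem_insert.1 hr with rfl | hr
          · exact y.1.2
          · exact congrArg Subtype.val ((mem_torsionBySet_iff _ _).1 y.2 ⟨r, hr⟩)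
      exact isArtinian_of_injective toTorsion <| (LinearMap.injective_codRestrict_iff _).2 <|
        (torsionBy R A x).injective_subtype.comp (injective_subtype _)
    have : IsArtinian R (torsionBy R A x) := ih fun r hr y ↦
      (hs r (Finset.mem_insert_of_mem hr) y).imp fun n hn ↦ Subtype.ext hn
    exact isArtinian_of_torsionBy x (hs x (Finset.mem_insert_self x s))

theorem IsPowerTorsion.isArtinian {I : Ideal R} (htors : IsPowerTorsion A I) (hI : I.FG)
    [IsArtinian R (torsionBySet R A (I : Set R))] : IsArtinian R A := by
  obtain ⟨s, rfl⟩ := hI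
  have : IsArtinian R (torsionBySet R A (s : Set R)) := by
    rw [torsionBySet_eq_torsionBySet_span]; infer_instance
  exact isArtinian_of_torsionBySet_finset s fun x hx y ↦
    (htors y).imp fun n hn ↦ hn _ (Ideal.pow_mem_pow (Ideal.subset_span hx) n)

lemma surjective_smul_or_mem_radical_annihilator [IsArtinian R A]
    (hA : SupIrred (⊤ : Submodule R A)) (r : R) :
    Function.Surjective (r • · : A → A) ∨ r ∈ (Module.annihilator R A).radical := by
  obtain ⟨n, hn⟩ := Filter.eventually_atTop.1
    (LinearMap.eventually_codisjoint_ker_pow_range_pow (LinearMap.lsmul R A r))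
  rcases hA.2 (codisjoint_iff.1 (hn (n + 1) n.le_succ)) with ker_eq | range_eq
  · refine .inr ⟨n + 1, Module.mem_annihilator.2 fun y ↦ ?_⟩
    exact (congrFun (smul_iterate r (n + 1)) y).symm.trans
      ((Module.End.pow_apply _ _ _).symm.trans (ker_eq.ge (mem_top (x := y))))
  · refine .inl fun y ↦ ?_
    obtain ⟨z, rfl⟩ := range_eq.ge (mem_top (x := y))
    exact ⟨(LinearMap.lsmul R A r ^ n) z, by rw [pow_succ']; rfl⟩

lemma notMem_radical_annihilator_of_surjective [Nontrivial A] {r : R}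
    (hr : Function.Surjective (r • · : A → A)) : r ∉ (Module.annihilator R A).radical := by
  rintro ⟨n, hn⟩
  obtain ⟨y, hy⟩ := exists_ne (0 : A)
  obtain ⟨z, rfl⟩ := hr.iterate n y
  exact hy (by simpa [smul_iterate] using Module.mem_annihilator.1 hn z)

theorem isPrime_radical_annihilator_of_supIrred [IsArtinian R A]
    (hA : SupIrred (⊤ : Submodule R A)) : (Module.annihilator R A).radical.IsPrime := by
  have : Nontrivial A := not_subsingleton_iff_nontrivial.1 fun _ ↦
    hA.1 (Subsingleton.elim (⊥ : Submodule R A) ⊤ ▸ isMin_bot)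
  have surj {r : R} (hr : r ∉ (Module.annihilator R A).radical) :=
    (surjective_smul_or_mem_radical_annihilator hA r).resolve_right hr
  refine ⟨fun h ↦ notMem_radical_annihilator_of_surjective (A := A) (r := (1 : R))
    (fun y ↦ ⟨y, one_smul R y⟩) (h ▸ mem_top), fun {r s} hrs ↦ ?_⟩
  by_contra! h
  refine notMem_radical_annihilator_of_surjective (A := A) ?_ hrs
  simpa [Function.comp_def, smul_smul] using (surj h.1).comp (surj h.2)

lemma supIrred_top_of_supIrred {C : Submodule R A} (hC : SupIrred C) :
    SupIrred (⊤ : Submodule R C) := by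
  have map_injective := Submodule.map_injective_of_injective C.injective_subtype
  refine ⟨fun h ↦ hC.1 ?_, fun {U V} h ↦ ?_⟩
  · rw [isMin_iff_eq_bot] at h ⊢
    rw [← C.map_subtype_top, h, Submodule.map_bot]
  · refine (@hC.2 (U.map C.subtype) (V.map C.subtype) ?_).imp ?_ ?_
    · rw [← Submodule.map_sup, h, C.map_subtype_top]
    all_goals exact fun h ↦ map_injective (h.trans C.map_subtype_top.symm)

end Artinian

section Cofinite

variable {R : Type u} [CommRing R] {a : Ideal R} {N : Type u} [AddCommGroup N] [Module R N]
  {N' : Type u} [AddCommGroup N'] [Module R N']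

open Submodule

/-- `Hom_R(R ⧸ a, N)` is the `a`-torsion of `N`, by evaluation at `1`. -/
def quotientHomEquivTorsionBySet (a : Ideal R) (N : Type*) [AddCommGroup N] [Module R N] :
    ((R ⧸ a) →ₗ[R] N) ≃ₗ[R] torsionBySet R N (a : Set R) where
  toFun f := ⟨f 1, (mem_torsionBySet_iff _ _).2 fun r ↦ by
    rw [← map_smul, Algebra.smul_def, mul_one, Ideal.Quotient.algebraMap_eq,
      Ideal.Quotient.eq_zero_iff_mem.2 r.2, map_zero]⟩
  map_add' _ _ := rfl
  map_smul' _ _ := rfl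
  invFun y := a.liftQ (LinearMap.toSpanSingleton R N y.1) fun r hr ↦
    (mem_torsionBySet_iff _ _).1 y.2 ⟨r, hr⟩
  left_inv f := by
    refine Submodule.linearMap_qext _ (LinearMap.ext_ring ?_)
    exact one_smul R (f 1)
  right_inv y := Subtype.ext (one_smul R y.1)

lemma finiteExt_zero_iff_finite_torsionBySet :
    FiniteExt R (R ⧸ a) N 0 ↔ Module.Finite R (torsionBySet R N (a : Set R)) :=
  FiniteExt.zero_iff.trans (Module.Finite.equiv_iff (quotientHomEquivTorsionBySet a N))

lemma torsionBySet_eq_top_of_le_annihilator (h : a ≤ Module.annihilator R N) :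
    torsionBySet R N (a : Set R) = ⊤ :=
  eq_top_iff'.2 fun y ↦ (mem_torsionBySet_iff _ _).2 fun r ↦ Module.mem_annihilator.1 (h r.2) y

lemma exact_subtype_torsionBy_rangeRestrict (x : R) :
    Function.Exact (torsionBy R N x).subtype (LinearMap.lsmul R N x).rangeRestrict :=
  LinearMap.exact_iff.2 (by rw [LinearMap.ker_rangeRestrict, range_subtype]; rfl)

lemma smul_ext_eq_zero {X : Type u} [AddCommGroup X] [Module R X] {x : R}
    (hx : x ∈ Module.annihilator R X) {Y : ModuleCat.{u} R} {i : ℕ}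
    (α : Abelian.Ext (ModuleCat.of R X) Y i) : x • α = 0 := by
  have smul_id : x • 𝟙 (ModuleCat.of R X) = 0 :=
    ModuleCat.hom_ext <| LinearMap.ext fun y ↦ Module.mem_annihilator.1 hx y
  rw [← Abelian.Ext.mk₀_id_comp α, ← Abelian.Ext.smul_comp, ← Abelian.Ext.mk₀_smul, smul_id,
    Abelian.Ext.mk₀_zero, Abelian.Ext.zero_comp]

lemma ext_comp_mk₀_subtype_range_eq_zero {x : R} (hx : x ∈ a) {i : ℕ}
    (α : Abelian.Ext (ModuleCat.of R (R ⧸ a)) (ModuleCat.of R N) i) :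
    (α.comp (Abelian.Ext.mk₀ (ModuleCat.ofHom (LinearMap.lsmul R N x).rangeRestrict))
      (add_zero i)).comp (Abelian.Ext.mk₀ (ModuleCat.ofHom (LinearMap.range _).subtype))
      (add_zero i) = 0 := by
  rw [Abelian.Ext.comp_assoc_of_second_deg_zero, Abelian.Ext.mk₀_comp_mk₀]
  calc _ = α.comp (Abelian.Ext.mk₀ (x • 𝟙 (ModuleCat.of R N))) (add_zero i) := rfl
    _ = x • α := (Abelian.Ext.smul_eq_comp_mk₀ _ _).symm
    _ = 0 := smul_ext_eq_zero (a.annihilator_quotient.ge hx) α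

variable [IsNoetherianRing R]

lemma finiteExt_zero_of_injective (f : N →ₗ[R] N') (hf : Function.Injective f)
    (h : FiniteExt R (R ⧸ a) N' 0) : FiniteExt R (R ⧸ a) N 0 := by
  rw [FiniteExt.zero_iff] at *
  exact .of_injective (f.compRight R) fun _ _ h ↦ LinearMap.ext fun y ↦ hf (LinearMap.congr_fun h y)

lemma HasFiniteExt.of_finite [hN : Module.Finite R N] : HasFiniteExt a N := fun i ↦
  have : Module.Finite R (ModuleCat.of R N) := hN
  have : Module.Finite R (ModuleCat.of R (R ⧸ a)) := inferInstanceAs (Module.Finite R (R ⧸ a))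
  ModuleCat.finite_ext R _ _ i

lemma HasFiniteExt.of_le_annihilator (ha : a ≤ Module.annihilator R N)
    (h : FiniteExt R (R ⧸ a) N 0) : HasFiniteExt a N := by
  rw [finiteExt_zero_iff_finite_torsionBySet, torsionBySet_eq_top_of_le_annihilator ha] at h
  have : Module.Finite R N := .equiv topEquiv
  exact .of_finite

theorem HasFiniteExt.of_torsionBy_of_quotient_range {x : R} (hx : x ∈ a)
    (hker : HasFiniteExt a (torsionBy R N x))
    (hcoker : HasFiniteExt a (N ⧸ LinearMap.range (LinearMap.lsmul R N x))) :
    HasFiniteExt a N := by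
  rintro (_ | i)
  · have := hker 0
    rw [FiniteExt.zero_iff] at *
    refine .of_surjective ((torsionBy R N x).subtype.compRight R) fun f ↦
      ⟨f.codRestrict _ fun y ↦ ?_, rfl⟩
    rw [mem_torsionBy_iff, ← map_smul, Module.mem_annihilator.1 (a.annihilator_quotient.ge hx),
      map_zero]
  · have shortExact_ker := shortExact_shortComplexOfCompEqZero (torsionBy R N x).injective_subtype
      (LinearMap.surjective_rangeRestrict _) (exact_subtype_torsionBy_rangeRestrict x)
    have shortExact_coker := shortExact_shortComplexOfCompEqZero
      (LinearMap.range (LinearMap.lsmul R N x)).injective_subtype (mkQ_surjective _)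
      (LinearMap.exact_subtype_mkQ _)
    let connecting := shortExact_coker.extClass.postcompOfLinear R (ModuleCat.of R (R ⧸ a))
      (Eq.refl (i + 1))
    let toRange := (Abelian.Ext.mk₀ (ModuleCat.ofHom (LinearMap.lsmul R N x).rangeRestrict))
      |>.postcompOfLinear R (ModuleCat.of R (R ⧸ a)) (add_zero (i + 1))
    have range_le : LinearMap.range toRange ≤ LinearMap.range connecting := by
      rintro _ ⟨α, rfl⟩
      exact Abelian.Ext.covariant_sequence_exact₁ _ shortExact_coker _
        (ext_comp_mk₀_subtype_range_eq_zero hx α) rfl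
    have := hker (i + 1)
    have := hcoker i
    have : Module.Finite R (LinearMap.range toRange) := Module.Finite.of_injective _
      (inclusion_injective range_le)
    exact finite_of_ker_le_range ((Abelian.Ext.mk₀ (ModuleCat.ofHom (torsionBy R N x).subtype))
      |>.postcompOfLinear R (ModuleCat.of R (R ⧸ a)) (add_zero (i + 1))) toRange
      fun α hα ↦ Abelian.Ext.covariant_sequence_exact₂ _ shortExact_ker α hα

end Cofinite

section ArtinianCofinite

variable {R : Type u} [CommRing R]

open Submodule

theorem isArtinian_of_annihilator_le_isMaximal {R : Type*} [CommRing R] [IsNoetherianRing R]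
    (N : Type*) [AddCommGroup N] [Module R N] [hN : Module.Finite R N]
    (hmax : ∀ p : Ideal R, p.IsPrime → Module.annihilator R N ≤ p → p.IsMaximal) :
    IsArtinian R N := by
  induction hN using IsNoetherianRing.induction_on_isQuotientEquivQuotientPrime R with
  | subsingleton N => infer_instance
  | quotient N p e =>
    have : p.1.IsMaximal :=
      hmax p.1 p.2 (e.annihilator_eq.trans p.1.annihilator_quotient).le
    have : IsSimpleModule R (R ⧸ p.1) := isSimpleModule_iff_isCoatom.2 this.out
    exact isArtinian_of_linearEquiv e.symm
  | exact N₁ N₂ N₃ f g hf hg hfg artinian₁ artinian₃ =>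
    have := artinian₁ fun p hp h ↦ hmax p hp ((f.annihilator_le_of_injective hf).trans h)
    have := artinian₃ fun p hp h ↦ hmax p hp ((g.annihilator_le_of_surjective hg).trans h)
    exact isArtinian_of_range_eq_ker f g (LinearMap.exact_iff.1 hfg).symm

lemma exists_mem_notMem_forall_map_le {R S : Type*} [CommRing R] [CommRing S] [Algebra R S]
    {a c : Ideal R} (hac : ¬ a ≤ c) (P : Finset (Ideal S)) (hP : ∀ p ∈ P, p.IsPrime) :
    ∃ x ∈ a, x ∉ c ∧ ∀ p ∈ P, algebraMap R S x ∈ p → a.map (algebraMap R S) ≤ p := by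
  classical
  let avoid : Finset (Ideal R) :=
    insert c ((P.image (Ideal.comap (algebraMap R S))).filter fun p ↦ ¬ a ≤ p)
  have not_le : ∀ p ∈ avoid, ¬ a ≤ p := by
    intro p hp
    rcases Finset.mem_insert.1 hp with rfl | hp
    exacts [hac, (Finset.mem_filter.1 hp).2]
  have isPrime : ∀ p ∈ avoid, p ≠ c → p ≠ c → p.IsPrime := by
    intro p hp hpc _
    obtain ⟨q, hq, rfl⟩ :=
      Finset.mem_image.1 (Finset.mem_filter.1 (Finset.mem_of_mem_insert_of_ne hp hpc)).1
    exact (hP q hq).comap _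
  have not_subset : ¬ (a : Set R) ⊆ ⋃ p ∈ (avoid : Set (Ideal R)), (p : Set R) := fun h ↦ by
    obtain ⟨p, hp, hap⟩ := (Ideal.subset_union_prime (f := id) c c isPrime).1 h
    exact not_le p hp hap
  obtain ⟨x, hxa, hx⟩ := Set.not_subset.1 not_subset
  simp only [Set.mem_iUnion, not_exists] at hx
  refine ⟨x, hxa, hx c (Finset.mem_insert_self _ _), fun p hp hxp ↦ Ideal.map_le_iff_le_comap.2 ?_⟩
  by_contra h
  exact hx (p.comap (algebraMap R S)) (Finset.mem_insert_of_mem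
    (Finset.mem_filter.2 ⟨Finset.mem_image_of_mem _ hp, h⟩)) hxp

lemma le_range_or_le_torsionBySet_pow {R : Type*} [CommRing R] {A : Type*} [AddCommGroup A]
    [Module R A] [IsArtinian R A] {J : Ideal R} (hJ : J.FG) {x : R} {C : Submodule R A}
    (hC : SupIrred C)
    (h : x ∈ (Module.annihilator R C).radical → J ≤ (Module.annihilator R C).radical) :
    C ≤ LinearMap.range (LinearMap.lsmul R A x) ∨ ∃ n, C ≤ torsionBySet R A (J ^ n : Ideal R) := by
  rcases surjective_smul_or_mem_radical_annihilator (supIrred_top_of_supIrred hC) x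
    with surjective | hx
  · refine .inl fun y hy ↦ ?_
    obtain ⟨z, hz⟩ := surjective ⟨y, hy⟩
    exact ⟨z, congrArg Subtype.val hz⟩
  · obtain ⟨n, hn⟩ := Ideal.exists_pow_le_of_le_radical_of_fg (h hx) hJ
    refine .inr ⟨n, fun y hy ↦ (mem_torsionBySet_iff _ _).2 fun r ↦ ?_⟩
    exact congrArg Subtype.val (Module.mem_annihilator.1 (hn r.2) ⟨y, hy⟩)

lemma exists_sup_torsionBySet_pow_eq_top {R : Type*} [CommRing R] {A : Type*} [AddCommGroup A]
    [Module R A] {J : Ideal R} {B : Submodule R A} {s : Finset (Submodule R A)} (hs : s.sup id = ⊤)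
    (h : ∀ C ∈ s, C ≤ B ∨ ∃ n, C ≤ torsionBySet R A (J ^ n : Ideal R)) :
    ∃ n, B ⊔ torsionBySet R A (J ^ n : Ideal R) = ⊤ := by
  have (C : s) : ∃ n, C.1 ≤ B ⊔ torsionBySet R A (J ^ n : Ideal R) := by
    rcases h C C.2 with h | ⟨n, h⟩
    exacts [⟨0, h.trans le_sup_left⟩, ⟨n, h.trans le_sup_right⟩]
  choose n hn using this
  refine ⟨s.attach.sup n, top_le_iff.1 (hs ▸ Finset.sup_le fun C hC ↦ (hn ⟨C, hC⟩).trans ?_)⟩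
  exact sup_le_sup_left (torsionBySet_le_torsionBySet_of_subset
    (Ideal.pow_le_pow_right (Finset.le_sup (Finset.mem_attach s ⟨C, hC⟩)))) B

lemma finite_torsionBySet_pow [IsNoetherianRing R] {A : Type u} [AddCommGroup A] [Module R A]
    (J : Ideal R) [h : Module.Finite R (torsionBySet R A (J : Set R))] (n : ℕ) :
    Module.Finite R (torsionBySet R A (J ^ n : Ideal R)) := by
  rw [← finiteExt_zero_iff_finite_torsionBySet] at h ⊢
  refine .of_pow_le_annihilator (b := J) (n := n) (fun i hi ↦ ?_) Ideal.annihilator_quotient.ge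
  rwa [Nat.le_zero.1 hi]

/-- An Artinian module is a finite sum of sum-irreducible submodules, each of which is either
divisible by `x` or killed by a power of `x`; prime avoidance selects an `x` for which the latter
are already killed by a power of `a`. -/
theorem exists_mem_notMem_finite_quotient_range {R : Type*} [CommRing R] {S A : Type u} [CommRing S]
    [IsNoetherianRing S] [Algebra R S] [AddCommGroup A] [Module S A] [IsArtinian S A]
    {a c : Ideal R} (hac : ¬ a ≤ c)
    [Module.Finite S (torsionBySet S A (a.map (algebraMap R S) : Set S))] :
    ∃ x ∈ a, x ∉ c ∧
      Module.Finite S (A ⧸ LinearMap.range (LinearMap.lsmul S A (algebraMap R S x))) := by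
  classical
  obtain ⟨s, hs, irreducible⟩ := exists_supIrred_decomposition (⊤ : Submodule S A)
  obtain ⟨x, hxa, hxc, hx⟩ := exists_mem_notMem_forall_map_le (S := S) hac
    (s.image fun C ↦ (Module.annihilator S C).radical) fun p hp ↦ by
      obtain ⟨C, hC, rfl⟩ := Finset.mem_image.1 hp
      exact isPrime_radical_annihilator_of_supIrred (supIrred_top_of_supIrred (irreducible hC))
  obtain ⟨n, hn⟩ := exists_sup_torsionBySet_pow_eq_top (J := a.map (algebraMap R S)) hs fun C hC ↦
    le_range_or_le_torsionBySet_pow (IsNoetherian.noetherian _) (irreducible hC)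
      (hx _ (Finset.mem_image_of_mem _ hC))
  have := finite_torsionBySet_pow (A := A) (a.map (algebraMap R S)) n
  refine ⟨x, hxa, hxc, .of_surjective ((mkQ _).domRestrict
    (torsionBySet S A ((a.map (algebraMap R S)) ^ n : Ideal S))) ?_⟩
  rw [← LinearMap.range_eq_top, LinearMap.range_domRestrict, map_mkQ_eq_top, hn]

lemma annihilator_lt_annihilator_torsionBy {N : Type*} [AddCommGroup N] [Module R N] {x : R}
    (hx : x ∉ Module.annihilator R N) :
    Module.annihilator R N < Module.annihilator R (torsionBy R N x) :=
  (LinearMap.annihilator_le_of_injective _ (torsionBy R N x).injective_subtype).lt_of_not_ge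
    fun h ↦ hx (h (Module.mem_annihilator.2 (smul_torsionBy x)))

variable [IsNoetherianRing R] {a : Ideal R}

theorem HasFiniteExt.of_isArtinian {N : Type u} [AddCommGroup N] [Module R N] [hN : IsArtinian R N]
    (h0 : FiniteExt R (R ⧸ a) N 0) : HasFiniteExt a N := by
  induction hI : Module.annihilator R N using WellFoundedGT.induction generalizing N with | _ I ih
  subst hI
  by_cases ha : a ≤ Module.annihilator R N
  · exact .of_le_annihilator ha h0
  have : Module.Finite R (torsionBySet R N (a.map (algebraMap R R) : Set R)) := by
    rw [Algebra.algebraMap_self, Ideal.map_id, ← finiteExt_zero_iff_finite_torsionBySet]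
    exact h0
  obtain ⟨x, hxa, hx, finite⟩ := exists_mem_notMem_finite_quotient_range (S := R) (A := N) ha
  exact .of_torsionBy_of_quotient_range hxa
    (ih _ (annihilator_lt_annihilator_torsionBy hx)
      (finiteExt_zero_of_injective _ (injective_subtype _) h0) rfl)
    (.of_finite (hN := finite))

end ArtinianCofinite

section Localization

open Submodule

lemma torsionBySet_image_finset {A N ι : Type*} [CommRing A] [AddCommGroup N] [Module A N]
    (φ : ι → A) (g : Finset ι) :
    torsionBySet A N (φ '' g) = g.inf fun x ↦ torsionBy A N (φ x) := by
  rw [torsionBySet, Set.image_image, sInf_image, Finset.inf_eq_iInf]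
  rfl

variable {R : Type*} (S : Type*) [CommRing R] [CommRing S] [Algebra R S] (p : Submonoid R)
  [IsLocalization p S] {M M' : Type*} [AddCommGroup M] [Module R M] [AddCommGroup M'] [Module R M']
  [Module S M'] [IsScalarTower R S M'] (f : M →ₗ[R] M') [IsLocalizedModule p f]

lemma localized'_range_lsmul (x : R) : (LinearMap.range (LinearMap.lsmul R M x)).localized' S p f =
    LinearMap.range (LinearMap.lsmul S M' (algebraMap R S x)) := by
  rw [LinearMap.localized'_range_eq_range_localizedMap S p f f]
  congr 1
  ext y
  obtain ⟨⟨m, s⟩, rfl⟩ := IsLocalizedModule.mk'_surjective p f y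
  simp [IsLocalizedModule.map_mk', IsLocalizedModule.mk'_smul]

lemma localized'_torsionBy (x : R) :
    (torsionBy R M x).localized' S p f = torsionBy S M' (algebraMap R S x) := by
  refine (LinearMap.localized'_ker_eq_ker_localizedMap S p f f (LinearMap.lsmul R M x)).trans ?_
  ext y
  obtain ⟨⟨m, s⟩, rfl⟩ := IsLocalizedModule.mk'_surjective p f y
  simp [IsLocalizedModule.map_mk', IsLocalizedModule.mk'_smul]

lemma localized'_torsionBySet {I : Ideal R} (hI : I.FG) :
    (torsionBySet R M (I : Set R)).localized' S p f =
      torsionBySet S M' (I.map (algebraMap R S) : Set S) := by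
  obtain ⟨g, rfl⟩ := hI
  rw [Ideal.map_span, ← torsionBySet_eq_torsionBySet_span, ← torsionBySet_eq_torsionBySet_span,
    torsionBySet_image_finset, ← Set.image_id (g : Set R), torsionBySet_image_finset,
    ← IsLocalizedModule.localized'FrameHom_apply, map_finset_inf]
  exact Finset.inf_congr rfl fun x _ ↦ localized'_torsionBy S p f x

include S f in
lemma exists_fg_forall_exists_smul_mem [Module.Finite S M'] :
    ∃ L : Submodule R M, L.FG ∧ ∀ m, ∃ s ∈ p, s • m ∈ L := by
  classical
  obtain ⟨g, hg⟩ := Module.Finite.fg_top (R := S) (M := M')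
  choose frac hfrac using fun y ↦ IsLocalizedModule.mk'_surjective p f y
  let L := span R ((fun y ↦ (frac y).1) '' (g : Set M'))
  have localized_eq_top : L.localized' S p f = ⊤ := by
    rw [eq_top_iff, ← hg, span_le]
    exact fun y hy ↦ ⟨(frac y).1, subset_span ⟨y, hy, rfl⟩, (frac y).2, hfrac y⟩
  refine ⟨L, ⟨g.image fun y ↦ (frac y).1, by rw [Finset.coe_image]⟩, fun m ↦ ?_⟩
  obtain ⟨l, hl, s, hs⟩ := localized_eq_top.ge (mem_top (x := f m))
  rw [IsLocalizedModule.mk'_eq_iff, ← LinearMap.map_smul_of_tower,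
    IsLocalizedModule.eq_iff_exists p] at hs
  obtain ⟨c, hc⟩ := hs
  exact ⟨c * s, p.mul_mem c.2 s.2, by
    rw [mul_smul]; exact (show c • l = _ from hc) ▸ L.smul_of_tower_mem c hl⟩

end Localization

section Dimension

variable {R : Type*} [CommRing R]

/-- The elements lying in no non-maximal prime containing `a`. When `dim R ⧸ a ≤ 1`, inverting them
leaves only finitely many primes above `a`, all of them maximal. -/
def outsideNonmaximalPrimes (a : Ideal R) : Submonoid R where
  carrier := {s | ∀ p : Ideal R, p.IsPrime → a ≤ p → s ∈ p → p.IsMaximal}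
  one_mem' p hp _ h := (hp.ne_top ((Ideal.eq_top_iff_one p).2 h)).elim
  mul_mem' hs ht p hp hap h := (hp.mem_or_mem h).elim (hs p hp hap) (ht p hp hap)

variable {a : Ideal R} (hdim : ringKrullDim (R ⧸ a) ≤ 1)
include hdim

lemma mem_minimalPrimes_of_not_isMaximal {p : Ideal R} (hp : p.IsPrime) (hap : a ≤ p)
    (hmax : ¬ p.IsMaximal) : p ∈ a.minimalPrimes := by
  rw [ringKrullDim_quotient, Order.krullDim_le_one_iff] at hdim
  rcases hdim ⟨⟨p, hp⟩, hap⟩ with isMin | isMax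
  · exact ⟨⟨hp, hap⟩, fun q hq hqp ↦ isMin (b := ⟨⟨q, hq.1⟩, hq.2⟩) hqp⟩
  · obtain ⟨m, hm, hpm⟩ := p.exists_le_maximal hp.ne_top
    have hmp : m ≤ p := isMax (b := ⟨⟨m, hm.isPrime⟩, hap.trans hpm⟩) hpm
    exact absurd (hpm.antisymm hmp ▸ hm) hmax

variable [IsNoetherianRing R]

lemma mem_minimalPrimes_of_disjoint {q : Ideal R} (hq : q.IsPrime) (haq : a ≤ q)
    (hd : Disjoint (outsideNonmaximalPrimes a : Set R) q) : q ∈ a.minimalPrimes := by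
  have finite : {p : Ideal R | p.IsPrime ∧ a ≤ p ∧ ¬ p.IsMaximal}.Finite :=
    a.finite_minimalPrimes_of_isNoetherianRing.subset fun p hp ↦
      mem_minimalPrimes_of_not_isMaximal hdim hp.1 hp.2.1 hp.2.2
  have subset_union : (q : Set R) ⊆ ⋃ p ∈ (finite.toFinset : Set (Ideal R)), (p : Set R) := by
    intro r hr
    have hrs : r ∉ outsideNonmaximalPrimes a := fun h ↦ Set.disjoint_left.1 hd h hr
    simp only [outsideNonmaximalPrimes, Submonoid.mem_mk, Subsemigroup.mem_mk, Set.mem_ofPred_eq,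
      not_forall] at hrs
    obtain ⟨p, hp, hap, hrp, hmax⟩ := hrs
    exact Set.mem_biUnion (by simpa using ⟨hp, hap, hmax⟩) hrp
  obtain ⟨p, hp, hqp⟩ := (Ideal.subset_union_prime (f := id) ⊥ ⊥ fun p hp _ _ ↦
    (finite.mem_toFinset.1 hp).1).1 subset_union
  obtain ⟨hp, hap, hmax⟩ := finite.mem_toFinset.1 hp
  have hpmin := mem_minimalPrimes_of_not_isMaximal hdim hp hap hmax
  exact (hqp.antisymm (hpmin.2 ⟨hq, haq⟩ hqp)) ▸ hpmin

theorem isMaximal_of_map_le (S : Type*) [CommRing S] [Algebra R S]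
    [IsLocalization (outsideNonmaximalPrimes a) S] {Q : Ideal S} (hQ : Q.IsPrime)
    (haQ : a.map (algebraMap R S) ≤ Q) : Q.IsMaximal := by
  have comap_mem {P : Ideal S} (hP : P.IsPrime) (hQP : Q ≤ P) :
      P.comap (algebraMap R S) ∈ a.minimalPrimes :=
    mem_minimalPrimes_of_disjoint hdim (hP.comap _) (Ideal.map_le_iff_le_comap.1 (haQ.trans hQP))
      ((IsLocalization.isPrime_iff_isPrime_disjoint (outsideNonmaximalPrimes a) S P).1 hP).2
  obtain ⟨m, hm, hQm⟩ := Q.exists_le_maximal hQ.ne_top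
  have comap_le : m.comap (algebraMap R S) ≤ Q.comap (algebraMap R S) :=
    (comap_mem hm.isPrime hQm).2 (comap_mem hQ le_rfl).1 (Ideal.comap_mono hQm)
  have hmQ : m ≤ Q := by
    rw [← IsLocalization.map_under (outsideNonmaximalPrimes a) S m]
    exact Ideal.map_le_iff_le_comap.2 comap_le
  exact hQm.antisymm hmQ ▸ hm

end Dimension

section PowerTorsion

open Submodule

namespace IsPowerTorsion

variable {R A B : Type*} [CommRing R] [AddCommGroup A] [Module R A] [AddCommGroup B] [Module R B]
  {I : Ideal R}

lemma of_injective (hB : IsPowerTorsion B I) (f : A →ₗ[R] B) (hf : Function.Injective f) :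
    IsPowerTorsion A I := fun y ↦
  (hB (f y)).imp fun n hn r hr ↦ hf (by rw [map_smul, hn r hr, map_zero])

lemma of_surjective (hA : IsPowerTorsion A I) (f : A →ₗ[R] B) (hf : Function.Surjective f) :
    IsPowerTorsion B I :=
  hf.forall.2 fun y ↦ (hA y).imp fun n hn r hr ↦ by rw [← map_smul, hn r hr, map_zero]

lemma of_isLocalizedModule {S : Type*} [CommRing S] [Algebra R S] (p : Submonoid R) [Module S B]
    [IsScalarTower R S B] (f : A →ₗ[R] B) [IsLocalizedModule p f] (hA : IsPowerTorsion A I) :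
    IsPowerTorsion B (I.map (algebraMap R S)) := by
  intro y
  obtain ⟨⟨m, s⟩, rfl⟩ := IsLocalizedModule.mk'_surjective p f y
  obtain ⟨n, hn⟩ := hA m
  have map_le : (I ^ n).map (algebraMap R S) ≤
      LinearMap.ker (LinearMap.toSpanSingleton S B (IsLocalizedModule.mk' f m s)) := by
    refine Ideal.map_le_iff_le_comap.2 fun r hr ↦ ?_
    change algebraMap R S r • IsLocalizedModule.mk' f m s = 0
    rw [algebraMap_smul, ← IsLocalizedModule.mk'_smul, hn r hr, IsLocalizedModule.mk'_zero]
  exact ⟨n, fun r hr ↦ map_le (Ideal.map_pow (algebraMap R S) I n ▸ hr)⟩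

end IsPowerTorsion

lemma le_annihilator_torsionBySet {R A : Type*} [CommRing R] [AddCommGroup A] [Module R A]
    (I : Ideal R) : I ≤ Module.annihilator R (torsionBySet R A (I : Set R)) :=
  (Module.isTorsionBySet_iff_subset_annihilator R _).1 (torsionBySet_isTorsionBySet _)

section Localized

variable {R S : Type*} [CommRing R] [CommRing S] [Algebra R S] (p : Submonoid R)
  [IsLocalization p S] {M M' : Type*} [AddCommGroup M] [Module R M] [AddCommGroup M'] [Module R M']
  [Module S M'] [IsScalarTower R S M']

lemma finite_torsionBySet_map (f : M →ₗ[R] M') [IsLocalizedModule p f] {I : Ideal R} (hI : I.FG)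
    [Module.Finite R (torsionBySet R M (I : Set R))] :
    Module.Finite S (torsionBySet S M' (I.map (algebraMap R S) : Set S)) := by
  rw [← localized'_torsionBySet S p f hI]
  exact .of_isLocalizedModule p ((torsionBySet R M (I : Set R)).toLocalized' S p f)

theorem isArtinian_of_isLocalizedModule_outsideNonmaximalPrimes [IsNoetherianRing R] {a : Ideal R}
    (hdim : ringKrullDim (R ⧸ a) ≤ 1) [IsLocalization (outsideNonmaximalPrimes a) S]
    (f : M →ₗ[R] M') [IsLocalizedModule (outsideNonmaximalPrimes a) f] (htors : IsPowerTorsion M a)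
    [Module.Finite R (torsionBySet R M (a : Set R))] : IsArtinian S M' := by
  have : IsNoetherianRing S :=
    IsLocalization.isNoetherianRing (outsideNonmaximalPrimes a) S inferInstance
  have := finite_torsionBySet_map (S := S) (outsideNonmaximalPrimes a) f
    (IsNoetherian.noetherian a)
  have : IsArtinian S (torsionBySet S M' (a.map (algebraMap R S) : Set S)) :=
    isArtinian_of_annihilator_le_isMaximal _ fun Q hQ hle ↦
      isMaximal_of_map_le hdim S hQ ((le_annihilator_torsionBySet _).trans hle)
  exact (htors.of_isLocalizedModule (outsideNonmaximalPrimes a) f).isArtinian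
    (IsNoetherian.noetherian _)

end Localized

variable {R : Type u} [CommRing R] [IsNoetherianRing R] {a : Ideal R}
  {N : Type u} [AddCommGroup N] [Module R N]

theorem HasFiniteExt.of_forall_exists_smul_eq_zero (htors : IsPowerTorsion N a)
    (hN : ∀ y : N, ∃ s ∈ outsideNonmaximalPrimes a, s • y = 0)
    (h0 : FiniteExt R (R ⧸ a) N 0) : HasFiniteExt a N := by
  have : Module.Finite R (torsionBySet R N (a : Set R)) :=
    finiteExt_zero_iff_finite_torsionBySet.1 h0
  have : IsArtinian R (torsionBySet R N (a : Set R)) := by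
    refine isArtinian_of_annihilator_le_isMaximal _ fun p hp hle ↦ ?_
    obtain ⟨y, hy⟩ := Module.mem_support_iff_exists_annihilator.1
      ((Module.mem_support_iff_of_finite (p := ⟨p, hp⟩)).2 hle)
    obtain ⟨s, hs, hsy⟩ := hN y
    exact hs p hp ((le_annihilator_torsionBySet a).trans hle)
      (hy (mem_annihilator_span_singleton _ _ |>.2 (Subtype.ext hsy)))
  have := htors.isArtinian (IsNoetherian.noetherian a)
  exact .of_isArtinian h0

lemma HasFiniteExt.of_forall_exists_smul_mem (htors : IsPowerTorsion N a) {L : Submodule R N}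
    (hL : L.FG) (hN : ∀ y : N, ∃ s ∈ outsideNonmaximalPrimes a, s • y ∈ L)
    (h0 : FiniteExt R (R ⧸ a) N 0) : HasFiniteExt a N := by
  have finiteExt_L : HasFiniteExt a L := .of_finite (hN := Module.Finite.iff_fg.2 hL)
  have finiteExt_quotient : HasFiniteExt a (N ⧸ L) :=
    .of_forall_exists_smul_eq_zero (htors.of_surjective _ L.mkQ_surjective)
      (L.mkQ_surjective.forall.2 fun y ↦ (hN y).imp fun s ⟨hs, hsy⟩ ↦
        ⟨hs, by rwa [← map_smul, mkQ_apply, Quotient.mk_eq_zero]⟩)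
      (.covariant₃ L.injective_subtype L.mkQ_surjective (LinearMap.exact_subtype_mkQ L) h0
        (finiteExt_L 1))
  exact fun i ↦ .covariant₂ L.injective_subtype L.mkQ_surjective (LinearMap.exact_subtype_mkQ L)
    (finiteExt_L i) (finiteExt_quotient i)

variable (hdim : ringKrullDim (R ⧸ a) ≤ 1)
include hdim

lemma exists_mem_notMem_exists_fg_forall_exists_smul_mem (htors : IsPowerTorsion N a)
    [Module.Finite R (torsionBySet R N (a : Set R))] {c : Ideal R} (hac : ¬ a ≤ c) :
    ∃ x ∈ a, x ∉ c ∧ ∃ L : Submodule R (N ⧸ LinearMap.range (LinearMap.lsmul R N x)), L.FG ∧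
      ∀ y : N ⧸ _, ∃ s ∈ outsideNonmaximalPrimes a, s • y ∈ L := by
  let p := outsideNonmaximalPrimes a
  let S := Localization p
  let f := LocalizedModule.mkLinearMap p N
  have : IsNoetherianRing S := IsLocalization.isNoetherianRing p S inferInstance
  have : IsArtinian S (LocalizedModule p N) :=
    isArtinian_of_isLocalizedModule_outsideNonmaximalPrimes hdim f htors
  have := finite_torsionBySet_map (S := S) p f (IsNoetherian.noetherian a)
  obtain ⟨x, hxa, hxc, finite⟩ :=
    exists_mem_notMem_finite_quotient_range (S := S) (A := LocalizedModule p N) hac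
  rw [← localized'_range_lsmul S p f] at finite
  exact ⟨x, hxa, hxc, exists_fg_forall_exists_smul_mem S p
    ((LinearMap.range (LinearMap.lsmul R N x)).toLocalizedQuotient' S p f)⟩

theorem HasFiniteExt.of_isPowerTorsion (htors : IsPowerTorsion N a)
    (h0 : FiniteExt R (R ⧸ a) N 0) (h1 : FiniteExt R (R ⧸ a) N 1) : HasFiniteExt a N := by
  induction hI : Module.annihilator R N using WellFoundedGT.induction generalizing N with | _ I ih
  subst hI
  by_cases ha : a ≤ Module.annihilator R N
  · exact .of_le_annihilator ha h0
  have : Module.Finite R (torsionBySet R N (a : Set R)) :=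
    finiteExt_zero_iff_finite_torsionBySet.1 h0
  obtain ⟨x, hxa, hx, L, hL, hLN⟩ :=
    exists_mem_notMem_exists_fg_forall_exists_smul_mem hdim htors ha
  let K := torsionBy R N x
  let B := LinearMap.range (LinearMap.lsmul R N x)
  have surjective := LinearMap.surjective_rangeRestrict (LinearMap.lsmul R N x)
  have exact := exact_subtype_torsionBy_rangeRestrict (N := N) x
  have B_zero : FiniteExt R (R ⧸ a) B 0 := finiteExt_zero_of_injective _ B.injective_subtype h0
  have K_zero : FiniteExt R (R ⧸ a) K 0 := finiteExt_zero_of_injective _ K.injective_subtype h0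
  have K_one : FiniteExt R (R ⧸ a) K 1 :=
    .covariant₁ K.injective_subtype surjective exact B_zero h1
  have hK : HasFiniteExt a K := ih _ (annihilator_lt_annihilator_torsionBy hx)
    (htors.of_injective _ K.injective_subtype) K_zero K_one rfl
  have B_one : FiniteExt R (R ⧸ a) B 1 :=
    .covariant₃ K.injective_subtype surjective exact h1 (hK 2)
  have coker_zero : FiniteExt R (R ⧸ a) (N ⧸ B) 0 :=
    .covariant₃ B.injective_subtype B.mkQ_surjective (LinearMap.exact_subtype_mkQ B) h0 B_one
  exact .of_torsionBy_of_quotient_range hxa hK <|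
    .of_forall_exists_smul_mem (htors.of_surjective _ B.mkQ_surjective) hL hLN coker_zero

end PowerTorsion

section PowerTorsionPart

open Submodule
open Ideal (primaryComponent primaryComponent_mem)

variable {R : Type*} [CommRing R] {M N : Type*} [AddCommGroup M] [Module R M] [AddCommGroup N]
  [Module R N] {I : Ideal R}

lemma mem_primaryComponent_iff {x : M} :
    x ∈ primaryComponent M I ↔ ∃ n, ∀ r ∈ I ^ n, r • x = 0 := by
  simp only [primaryComponent_mem, mem_torsionBySet_iff, SetLike.coe_sort_coe, Subtype.forall]

lemma isPowerTorsion_primaryComponent : IsPowerTorsion (primaryComponent M I) I := fun y ↦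
  (mem_primaryComponent_iff.1 y.2).imp fun _ hn r hr ↦ Subtype.ext (hn r hr)

namespace IsPowerTorsion

lemma of_pow_le_annihilator {n : ℕ} (h : I ^ n ≤ Module.annihilator R M) : IsPowerTorsion M I :=
  fun y ↦ ⟨n, fun _ hr ↦ Module.mem_annihilator.1 (h hr) y⟩

lemma quotient_pow (I : Ideal R) (n : ℕ) : IsPowerTorsion (R ⧸ I ^ n) I :=
  of_pow_le_annihilator Ideal.annihilator_quotient.ge

lemma quotient (I : Ideal R) : IsPowerTorsion (R ⧸ I) I :=
  of_pow_le_annihilator ((pow_one I).trans_le Ideal.annihilator_quotient.ge)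

lemma map_mem_primaryComponent (hM : IsPowerTorsion M I) (f : M →ₗ[R] N) (x : M) :
    f x ∈ primaryComponent N I :=
  mem_primaryComponent_iff.2 <| (hM x).imp fun _ hn r hr ↦ by rw [← map_smul, hn r hr, map_zero]

lemma exists_pow_le_annihilator [Module.Finite R M] (h : IsPowerTorsion M I) :
    ∃ n, I ^ n ≤ Module.annihilator R M := by
  obtain ⟨s, hs⟩ := Module.Finite.fg_top (R := R) (M := M)
  choose n hn using h
  refine ⟨s.sup n, fun r hr ↦ ?_⟩
  rw [← annihilator_top, ← hs, mem_annihilator_span]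
  exact fun y ↦ hn y r (Ideal.pow_le_pow_right (Finset.le_sup y.2) hr)

end IsPowerTorsion

variable [IsNoetherianRing R]

lemma primaryComponent_quotient_primaryComponent :
    primaryComponent (M ⧸ primaryComponent M I) I = ⊥ := by
  refine eq_bot_iff.2 ((mkQ_surjective _).forall.2 fun y hy ↦ ?_)
  obtain ⟨t, ht⟩ := mem_primaryComponent_iff.1 hy
  let P : Submodule R M := Submodule.map (LinearMap.toSpanSingleton R M y) (I ^ t)
  have P_le : P ≤ primaryComponent M I := map_le_iff_le_comap.2 fun r hr ↦
    (Submodule.Quotient.mk_eq_zero (primaryComponent M I)).1 (ht r hr)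
  have : Module.Finite R P := .of_fg ((IsNoetherian.noetherian (I ^ t)).map _)
  obtain ⟨n, hn⟩ := (isPowerTorsion_primaryComponent.of_injective (inclusion P_le)
    (inclusion_injective P_le)).exists_pow_le_annihilator
  refine (Quotient.mk_eq_zero _).2 (mem_primaryComponent_iff.2 ⟨n + t, fun r hr ↦ ?_⟩)
  rw [pow_add] at hr
  refine Submodule.mul_induction_on hr (fun u hu v hv ↦ ?_) fun u v hu hv ↦ ?_
  · rw [mul_smul]
    exact congrArg Subtype.val (Module.mem_annihilator.1 (hn hu) ⟨v • y, v, hv, rfl⟩)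
  · rw [add_smul, hu, hv, add_zero]

/-- Artin–Rees: `I ^ m ∩ J ⊆ I ^ n J`, and `I ^ n` kills the image of `g`. -/
lemma IsPowerTorsion.exists_forall_mem_pow_map_eq_zero (hN : IsPowerTorsion N I) {J : Ideal R}
    (g : J →ₗ[R] N) : ∃ m, ∀ y : J, (y : R) ∈ I ^ m → g y = 0 := by
  obtain ⟨n, hn⟩ := (hN.of_injective _ (LinearMap.range g).injective_subtype)
    |>.exists_pow_le_annihilator
  obtain ⟨k, hk⟩ := Ideal.exists_pow_inf_eq_pow_smul I J
  have pow_inf_le : I ^ (n + k) • ⊤ ⊓ J ≤ I ^ n • J := by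
    rw [hk (n + k) (Nat.le_add_left k n), Nat.add_sub_cancel]
    exact smul_mono_right _ inf_le_right
  refine ⟨n + k, fun y hy ↦ ?_⟩
  have y_mem : y ∈ I ^ n • (⊤ : Submodule R J) :=
    (mem_smul_top_iff _ _ _).2 (pow_inf_le ⟨by rwa [smul_eq_mul, Ideal.mul_top], y.2⟩)
  have smul_top_le : I ^ n • (⊤ : Submodule R J) ≤ LinearMap.ker g := smul_le.2 fun r hr w _ ↦ by
    rw [LinearMap.mem_ker, map_smul]
    exact congrArg Subtype.val (Module.mem_annihilator.1 (hn hr) (g.rangeRestrict w))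
  exact smul_top_le y_mem

end PowerTorsionPart

section Injective

open Submodule
open Ideal (primaryComponent)

variable {R : Type u} [CommRing R] {M E : Type u} [AddCommGroup M] [Module R M] [AddCommGroup E]
  [Module R E] {I : Ideal R}

lemma exists_comp_eq_of_ker_le [Module.Injective R E] {A B : Type u} [AddCommGroup A]
    [AddCommGroup B] [Module R A] [Module R B] (j : A →ₗ[R] B) (g : A →ₗ[R] E)
    (h : LinearMap.ker j ≤ LinearMap.ker g) : ∃ g' : B →ₗ[R] E, g' ∘ₗ j = g := by
  obtain ⟨g', hg'⟩ := Module.Injective.extension_property R _ _ _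
    ((LinearMap.ker j).liftQ j le_rfl)
    (LinearMap.ker_eq_bot.1 (ker_liftQ_eq_bot _ _ _ le_rfl)) ((LinearMap.ker j).liftQ g h)
  exact ⟨g', LinearMap.ext fun x ↦ congr($hg' (Submodule.Quotient.mk x))⟩

lemma injective_quotient [Module.Injective R E] (P : Submodule R E) [Module.Injective R P] :
    Module.Injective R (E ⧸ P) := by
  have hS := shortExact_shortComplexOfCompEqZero P.injective_subtype P.mkQ_surjective
    (LinearMap.exact_subtype_mkQ P)
  rw [Module.injective_iff_injective_object] at *
  let s := hS.splittingOfInjective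
  exact Retract.injective { i := s.s, r := _, retract := s.s_g }

lemma exists_injective_linearMap (M : Type u) [AddCommGroup M] [Module R M] :
    ∃ (E : Type u) (_ : AddCommGroup E) (_ : Module R E) (_ : Module.Injective R E)
      (j : M →ₗ[R] E), Function.Injective j :=
  let E := CategoryTheory.Injective.under (ModuleCat.of R M)
  ⟨E, inferInstance, inferInstance, (Module.injective_iff_injective_object R E).2
    (inferInstanceAs (CategoryTheory.Injective (CategoryTheory.Injective.under _))),
    (CategoryTheory.Injective.ι (ModuleCat.of R M)).hom,
    (ModuleCat.mono_iff_injective _).1 inferInstance⟩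

lemma subsingleton_ext_succ [Module.Injective R E] (X : ModuleCat.{u} R) (i : ℕ) :
    Subsingleton (Abelian.Ext X (ModuleCat.of R E) (i + 1)) := by
  have := (Module.injective_iff_injective_object R E).1 inferInstance
  exact subsingleton_of_forall_eq 0 fun α ↦ α.eq_zero_of_injective

lemma subsingleton_ext_zero {X : Type u} [AddCommGroup X] [Module R X] (hX : IsPowerTorsion X I)
    (hM : primaryComponent M I = ⊥) :
    Subsingleton (Abelian.Ext (ModuleCat.of R X) (ModuleCat.of R M) 0) := by
  refine subsingleton_of_forall_eq 0 fun α ↦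
    (extZeroEquiv X M).map_eq_zero_iff.1 (LinearMap.ext fun x ↦ ?_)
  exact (mem_bot R).1 (hM ▸ hX.map_mem_primaryComponent _ x)

lemma subsingleton_ext {X : Type u} [AddCommGroup X] [Module R X] (hX : IsPowerTorsion X I)
    [Module.Injective R E] (hE : primaryComponent E I = ⊥) :
    ∀ i, Subsingleton (Abelian.Ext (ModuleCat.of R X) (ModuleCat.of R E) i)
  | 0 => subsingleton_ext_zero hX hE
  | i + 1 => subsingleton_ext_succ _ i

variable [IsNoetherianRing R]

instance injective_primaryComponent [Module.Injective R E] :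
    Module.Injective R (primaryComponent E I) := by
  refine Module.Baer.injective fun J g ↦ ?_
  obtain ⟨m, hm⟩ := isPowerTorsion_primaryComponent.exists_forall_mem_pow_map_eq_zero g
  obtain ⟨g', hg'⟩ := exists_comp_eq_of_ker_le ((I ^ m).mkQ ∘ₗ J.subtype)
    ((primaryComponent E I).subtype ∘ₗ g) fun y hy ↦ by
      have y_mem : (y : R) ∈ I ^ m := (Submodule.Quotient.mk_eq_zero _).1 hy
      rw [LinearMap.mem_ker, LinearMap.comp_apply, hm y y_mem, map_zero]
  refine ⟨(g' ∘ₗ (I ^ m).mkQ).codRestrict _ fun r ↦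
    (IsPowerTorsion.quotient_pow I m).map_mem_primaryComponent g' _, fun x hx ↦ Subtype.ext ?_⟩
  exact congr($hg' ⟨x, hx⟩)

lemma IsPowerTorsion.exists_injective_linearMap (hM : IsPowerTorsion M I) :
    ∃ (E : Type u) (_ : AddCommGroup E) (_ : Module R E) (_ : Module.Injective R E)
      (_ : IsPowerTorsion E I) (j : M →ₗ[R] E), Function.Injective j := by
  obtain ⟨E, _, _, _, j, hj⟩ := CofiniteLocalCohomology.exists_injective_linearMap (R := R) M
  exact ⟨primaryComponent E I, inferInstance, inferInstance, inferInstance,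
    isPowerTorsion_primaryComponent, j.codRestrict _ (hM.map_mem_primaryComponent j),
    fun _ _ hxy ↦ hj congr(Subtype.val $hxy)⟩

lemma exists_injective_linearMap_of_primaryComponent_eq_bot (hM : primaryComponent M I = ⊥) :
    ∃ (E : Type u) (_ : AddCommGroup E) (_ : Module R E) (_ : Module.Injective R E)
      (_ : primaryComponent E I = ⊥) (j : M →ₗ[R] E), Function.Injective j := by
  obtain ⟨E, _, _, _, j, hj⟩ := exists_injective_linearMap (R := R) M
  refine ⟨E ⧸ primaryComponent E I, inferInstance, inferInstance, injective_quotient _,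
    primaryComponent_quotient_primaryComponent, mkQ _ ∘ₗ j, ?_⟩
  refine (injective_iff_map_eq_zero _).2 fun y hy ↦ ?_
  obtain ⟨n, hn⟩ := mem_primaryComponent_iff.1 ((Submodule.Quotient.mk_eq_zero _).1 hy)
  rw [← mem_bot R, ← hM]
  exact mem_primaryComponent_iff.2 ⟨n, fun r hr ↦ hj (by rw [map_smul, hn r hr, map_zero])⟩

end Injective

section QuotientPowers

open Abelian Submodule

variable {R : Type u} [CommRing R] (a : Ideal R)

/-- `R ⧸ a ^ t` as an object of the category of modules. -/
abbrev quotPow (t : ℕ) : ModuleCat.{u} R := ModuleCat.of R (R ⧸ a ^ t)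

/-- The projection `R ⧸ a ^ v → R ⧸ a ^ t` for `t ≤ v`. -/
def quotPowMap {t v : ℕ} (h : t ≤ v) : quotPow a v ⟶ quotPow a t :=
  ModuleCat.ofHom (factor (Ideal.pow_le_pow_right h))

lemma quotPowMap_comp_quotPowMap {t v w : ℕ} (h : t ≤ v) (h' : v ≤ w) :
    quotPowMap a h' ≫ quotPowMap a h = quotPowMap a (h.trans h') :=
  ModuleCat.hom_ext (linearMap_qext _ rfl)

/-- The transition map of the direct system whose colimit is local cohomology. -/
noncomputable def extTransition {t v : ℕ} (h : t ≤ v) (Y : ModuleCat.{u} R) (n : ℕ) :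
    Ext (quotPow a t) Y n →ₗ[R] Ext (quotPow a v) Y n :=
  (Ext.mk₀ (quotPowMap a h)).precompOfLinear R Y (zero_add n)

variable {a}

lemma extTransition_extTransition {t v w : ℕ} (h : t ≤ v) (h' : v ≤ w) {Y : ModuleCat.{u} R}
    {n : ℕ} (α : Ext (quotPow a t) Y n) :
    extTransition a h' Y n (extTransition a h Y n α) = extTransition a (h.trans h') Y n α :=
  (Ext.mk₀_comp_mk₀_assoc _ _ _).trans (by rw [quotPowMap_comp_quotPowMap]; rfl)

lemma extTransition_comp {t v : ℕ} (h : t ≤ v) {Y Z : ModuleCat.{u} R} {n m k : ℕ}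
    (α : Ext (quotPow a t) Y n) (β : Ext Y Z m) (hk : n + m = k) :
    extTransition a h Z k (α.comp β hk) = (extTransition a h Y n α).comp β hk :=
  (Ext.comp_assoc _ _ _ (zero_add n) hk (by lia)).symm

lemma IsPowerTorsion.exists_comp_eq_comp_quotPowMap {E C : Type u} [AddCommGroup E] [Module R E]
    [AddCommGroup C] [Module R C] (hE : IsPowerTorsion E a) {g : E →ₗ[R] C}
    (hg : Function.Surjective g) {t : ℕ} (f : quotPow a t ⟶ ModuleCat.of R C) :
    ∃ (v : ℕ) (h : t ≤ v) (f' : quotPow a v ⟶ ModuleCat.of R E),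
      f' ≫ ModuleCat.ofHom g = quotPowMap a h ≫ f := by
  obtain ⟨c, hc⟩ := hg (f.hom 1)
  obtain ⟨n, hn⟩ := hE c
  have hc' : a ^ max t n ≤ LinearMap.ker (LinearMap.toSpanSingleton R E c) := fun r hr ↦
    hn r (Ideal.pow_le_pow_right (le_max_right t n) hr)
  refine ⟨max t n, le_max_left t n, ModuleCat.ofHom ((a ^ max t n).liftQ _ hc'),
    ModuleCat.hom_ext (linearMap_qext _ (LinearMap.ext_ring ?_))⟩
  change g ((1 : R) • c) = f.hom 1
  rw [one_smul, hc]

theorem IsPowerTorsion.exists_extTransition_eq_zero [IsNoetherianRing R] {T : Type u}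
    [AddCommGroup T] [Module R T] (hT : IsPowerTorsion T a) {i t : ℕ}
    (α : Ext (quotPow a t) (ModuleCat.of R T) (i + 1)) :
    ∃ (v : ℕ) (h : t ≤ v), extTransition a h _ _ α = 0 := by
  induction i using Nat.strong_induction_on generalizing T t with | _ i ih
  obtain ⟨E, _, _, _, hE, j, hj⟩ := hT.exists_injective_linearMap
  have hS := shortExact_shortComplexOfCompEqZero hj (mkQ_surjective _)
    (LinearMap.exact_map_mkQ_range j)
  obtain ⟨β, rfl⟩ := Ext.covariant_sequence_exact₁ (quotPow a t) hS α
    ((subsingleton_ext_succ (quotPow a t) i).elim _ _) rfl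
  rcases i with _ | i
  · obtain ⟨f, rfl⟩ := (Ext.mk₀_bijective _ _).2 β
    obtain ⟨v, h, f', hf'⟩ := hE.exists_comp_eq_comp_quotPowMap (mkQ_surjective _) f
    refine ⟨v, h, ?_⟩
    calc _ = (extTransition a h _ 0 (Ext.mk₀ f)).comp hS.extClass _ := extTransition_comp _ _ _ _
      _ = ((Ext.mk₀ f').comp (Ext.mk₀ (ModuleCat.ofHom _)) (zero_add 0)).comp hS.extClass _ := by
        rw [Ext.mk₀_comp_mk₀, hf', ← Ext.mk₀_comp_mk₀]; rfl
      _ = 0 := by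
        rw [Ext.comp_assoc _ _ _ (zero_add 0) (zero_add 1) (by lia)]
        exact congr((Ext.mk₀ f').comp $(hS.comp_extClass) _).trans (Ext.comp_zero ..)
  · obtain ⟨v, h, hv⟩ := ih i i.lt_succ_self (hE.of_surjective _ (mkQ_surjective _)) β
    refine ⟨v, h, (extTransition_comp _ _ _ _).trans ?_⟩
    exact congr(Ext.comp $hv hS.extClass _).trans (Ext.zero_comp ..)

end QuotientPowers

section ExtColimit

open Abelian

variable {R : Type u} [CommRing R] (a : Ideal R)

/-- `H` is a model of `colim_t Ext^i(R ⧸ a ^ t, M)`: a compatible family of maps into `H` that is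
jointly surjective and kills a class only if some transition map kills it. -/
structure ExtColimit (i : ℕ) (M H : Type u) [AddCommGroup M] [Module R M] [AddCommGroup H]
    [Module R H] where
  ι (t : ℕ) : Ext (quotPow a t) (ModuleCat.of R M) i →ₗ[R] H
  ι_extTransition {t v : ℕ} (h : t ≤ v) (α : Ext (quotPow a t) (ModuleCat.of R M) i) :
    ι v (extTransition a h _ i α) = ι t α
  exists_rep (y : H) : ∃ t α, ι t α = y
  exists_extTransition_eq_zero {t : ℕ} (α : Ext (quotPow a t) (ModuleCat.of R M) i)
    (hα : ι t α = 0) : ∃ (v : ℕ) (h : t ≤ v), extTransition a h _ i α = 0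

variable {a} {i j : ℕ} {M N H : Type u} [AddCommGroup M] [Module R M] [AddCommGroup N] [Module R N]
  [AddCommGroup H] [Module R H]

lemma ExtColimit.isPowerTorsion (L : ExtColimit a i M H) : IsPowerTorsion H a := by
  intro y
  obtain ⟨t, α, rfl⟩ := L.exists_rep y
  refine ⟨t, fun r hr ↦ ?_⟩
  have hr' : r ∈ Module.annihilator R (R ⧸ a ^ t) := by rwa [Ideal.annihilator_quotient]
  rw [← map_smul, smul_ext_eq_zero hr' α, map_zero]

/-- A morphism of direct systems that is an isomorphism in the limit transfers models of the
colimit from its target to its source. -/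
noncomputable def ExtColimit.ofHom (L : ExtColimit a j N H)
    (d : ∀ t, Ext (quotPow a t) (ModuleCat.of R M) i →ₗ[R] Ext (quotPow a t) (ModuleCat.of R N) j)
    (hd : ∀ {t v} (h : t ≤ v) α, d v (extTransition a h _ i α) = extTransition a h _ j (d t α))
    (hsurj : ∀ t β, ∃ (v : ℕ) (h : t ≤ v) (α : _), d v α = extTransition a h _ j β)
    (hinj : ∀ t α, d t α = 0 → ∃ (v : ℕ) (h : t ≤ v), extTransition a h _ i α = 0) :
    ExtColimit a i M H where
  ι t := L.ι t ∘ₗ d t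
  ι_extTransition h α := congr(L.ι _ $(hd h α)).trans (L.ι_extTransition h _)
  exists_rep y := by
    obtain ⟨t, β, rfl⟩ := L.exists_rep y
    obtain ⟨v, h, α, hα⟩ := hsurj t β
    exact ⟨v, α, congr(L.ι v $hα).trans (L.ι_extTransition h β)⟩
  exists_extTransition_eq_zero {t} α hα := by
    obtain ⟨v, h, hv⟩ := L.exists_extTransition_eq_zero (d t α) hα
    obtain ⟨w, h', hw⟩ := hinj v _ ((hd h α).trans hv)
    exact ⟨w, h.trans h', (extTransition_extTransition h h' α).symm.trans hw⟩

variable {A B C : Type u} [AddCommGroup A] [Module R A] [AddCommGroup B] [Module R B]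
  [AddCommGroup C] [Module R C] {f : A →ₗ[R] B} {g : B →ₗ[R] C}

/-- Dimension shifting along `0 → A → B → C → 0` when the direct system of `B` vanishes. -/
noncomputable def ExtColimit.shift (hf : Function.Injective f) (hg : Function.Surjective g)
    (hfg : Function.Exact f g)
    (hB : ∀ t n, Subsingleton (Ext (quotPow a t) (ModuleCat.of R B) n))
    (L : ExtColimit a i C H) : ExtColimit a (i + 1) A H := by
  have hS := shortExact_shortComplexOfCompEqZero hf hg hfg
  have hbij (t) : Function.Bijective (hS.extClass.postcompOfLinear R (quotPow a t) rfl :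
      Ext (quotPow a t) (ModuleCat.of R C) i →ₗ[R] _) := by
    refine ⟨(injective_iff_map_eq_zero _).2 fun β hβ ↦ ?_, fun α ↦
      Ext.covariant_sequence_exact₁ _ hS α ((hB _ _).elim _ _) rfl⟩
    obtain ⟨γ, rfl⟩ := Ext.covariant_sequence_exact₃ _ hS β rfl hβ
    exact congr(Ext.comp $((hB t i).elim γ 0) _ _).trans (Ext.zero_comp ..)
  let e (t) := LinearEquiv.ofBijective _ (hbij t)
  have he {t v} (h : t ≤ v) (α) :
      (e v).symm (extTransition a h _ _ α) = extTransition a h _ _ ((e t).symm α) := by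
    rw [LinearEquiv.symm_apply_eq]
    exact congr(extTransition a h _ _ $(((e t).apply_symm_apply α).symm)).trans
      (extTransition_comp _ _ _ rfl)
  refine L.ofHom (fun t ↦ (e t).symm.toLinearMap) he
    (fun t β ↦ ⟨t, le_rfl, e t (extTransition a le_rfl _ _ β), (e t).symm_apply_apply _⟩)
    fun t α hα ↦ ⟨t, le_rfl, ?_⟩
  rw [(e t).symm.map_eq_zero_iff.1 hα, map_zero]

/-- In positive degrees the kernel of a map does not matter if it is power torsion. -/
noncomputable def ExtColimit.ofPowerTorsionKernel [IsNoetherianRing R]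
    (hf : Function.Injective f) (hg : Function.Surjective g) (hfg : Function.Exact f g)
    (hA : IsPowerTorsion A a) (L : ExtColimit a (i + 1) C H) : ExtColimit a (i + 1) B H := by
  have hS := shortExact_shortComplexOfCompEqZero hf hg hfg
  refine L.ofHom (fun t ↦ (Ext.mk₀ (ModuleCat.ofHom g)).postcompOfLinear R _ (add_zero _))
    (fun h α ↦ (extTransition_comp h α _ (add_zero _)).symm) (fun t β ↦ ?_) fun t α hα ↦ ?_
  · obtain ⟨v, h, hv⟩ := hA.exists_extTransition_eq_zero (β.comp hS.extClass rfl)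
    obtain ⟨α, hα⟩ := Ext.covariant_sequence_exact₃ _ hS (extTransition a h _ _ β) rfl
      ((extTransition_comp h β _ rfl).symm.trans hv)
    exact ⟨v, h, α, hα⟩
  · obtain ⟨γ, rfl⟩ := Ext.covariant_sequence_exact₂ _ hS α hα
    obtain ⟨v, h, hv⟩ := hA.exists_extTransition_eq_zero γ
    refine ⟨v, h, (extTransition_comp h γ _ _).trans ?_⟩
    exact congr(Ext.comp $hv _ _).trans (Ext.zero_comp ..)

end ExtColimit

section FiniteModel

open Abelian Submodule
open Ideal (primaryComponent)

variable {R : Type u} [CommRing R] {a : Ideal R} {M : Type u} [AddCommGroup M] [Module R M]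

lemma extZeroEquiv_extTransition {t v : ℕ} (h : t ≤ v)
    (α : Ext (quotPow a t) (ModuleCat.of R M) 0) :
    extZeroEquiv _ _ (extTransition a h _ 0 α) = extZeroEquiv _ _ α ∘ₗ (quotPowMap a h).hom := by
  obtain ⟨f, rfl⟩ := (Ext.mk₀_bijective _ _).2 α
  have extZeroEquiv_mk₀ {t} (f : quotPow a t ⟶ ModuleCat.of R M) :
      extZeroEquiv _ _ (Ext.mk₀ f) = f.hom :=
    congrArg ModuleCat.Hom.hom (Ext.linearEquiv₀.apply_symm_apply (R := R) f)
  rw [extZeroEquiv_mk₀]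
  exact congr(extZeroEquiv _ _ $(Ext.mk₀_comp_mk₀ (quotPowMap a h) f)).trans (extZeroEquiv_mk₀ _)

variable (a M) in
lemma torsionBySet_pow_le_primaryComponent (t : ℕ) :
    torsionBySet R M ↑(a ^ t) ≤ primaryComponent M a :=
  le_iSup (fun n ↦ torsionBySet R M ↑(a ^ n)) t

variable (a M) in
/-- Degree-zero classes over `R ⧸ a ^ t` are the elements killed by `a ^ t`. -/
noncomputable def extZeroEquivTorsionBySet (t : ℕ) :
    Ext (quotPow a t) (ModuleCat.of R M) 0 ≃ₗ[R] torsionBySet R M ↑(a ^ t) :=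
  extZeroEquiv _ _ ≪≫ₗ quotientHomEquivTorsionBySet (a ^ t) M

/-- In degree zero the colimit of `Hom(R ⧸ a ^ t, M)` is the submodule of `a`-power torsion. -/
noncomputable def ExtColimit.zero : ExtColimit a 0 M (primaryComponent M a) where
  ι t := inclusion (torsionBySet_pow_le_primaryComponent a M t) ∘ₗ
    (extZeroEquivTorsionBySet a M t).toLinearMap
  ι_extTransition h α := Subtype.ext congr($(extZeroEquiv_extTransition h α) 1)
  exists_rep y := by
    obtain ⟨t, ht⟩ := (Ideal.primaryComponent_mem M a y.1).1 y.2
    obtain ⟨α, hα⟩ := (extZeroEquivTorsionBySet a M t).surjective ⟨y, ht⟩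
    exact ⟨t, α, congr(inclusion (torsionBySet_pow_le_primaryComponent a M t) $hα)⟩
  exists_extTransition_eq_zero {t} α hα := by
    have eq_zero : α = 0 := (extZeroEquivTorsionBySet a M t).map_eq_zero_iff.1
      (inclusion_injective (torsionBySet_pow_le_primaryComponent a M t) hα)
    exact ⟨t, le_rfl, by rw [eq_zero, map_zero]⟩

variable [IsNoetherianRing R]

theorem hasFiniteExt_primaryComponent (hdim : ringKrullDim (R ⧸ a) ≤ 1) (hM : HasFiniteExt a M) :
    HasFiniteExt a (primaryComponent M a) := by
  have := subsingleton_ext_zero (.quotient a)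
    (primaryComponent_quotient_primaryComponent (M := M) (I := a))
  exact .of_isPowerTorsion hdim isPowerTorsion_primaryComponent
    (finiteExt_zero_of_injective _ (injective_subtype _) (hM 0))
    (.covariant₁ (injective_subtype _) (mkQ_surjective _) (LinearMap.exact_subtype_mkQ _)
      Module.Finite.of_finite (hM 1))

lemma HasFiniteExt.exists_extColimit_succ (hM : HasFiniteExt a M)
    (htors : primaryComponent M a = ⊥) :
    ∃ (C : Type u) (_ : AddCommGroup C) (_ : Module R C), HasFiniteExt a C ∧
      ∀ (i : ℕ) (H : Type u) [AddCommGroup H] [Module R H], ExtColimit a i C H →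
        Nonempty (ExtColimit a (i + 1) M H) := by
  obtain ⟨E, _, _, _, hE, f, hf⟩ := exists_injective_linearMap_of_primaryComponent_eq_bot htors
  have hfg := LinearMap.exact_map_mkQ_range f
  refine ⟨E ⧸ LinearMap.range f, _, _, fun i ↦ ?_, fun i H _ _ L ↦ ⟨L.shift hf (mkQ_surjective _)
    hfg fun t n ↦ subsingleton_ext (.quotient_pow a t) hE n⟩⟩
  have := subsingleton_ext (.quotient a) hE i
  exact .covariant₃ hf (mkQ_surjective _) hfg Module.Finite.of_finite (hM (i + 1))

theorem HasFiniteExt.exists_extColimit (hdim : ringKrullDim (R ⧸ a) ≤ 1) (hM : HasFiniteExt a M)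
    (i : ℕ) : ∃ (H : Type u) (_ : AddCommGroup H) (_ : Module R H), HasFiniteExt a H ∧
      Nonempty (ExtColimit a i M H) := by
  have hT := hasFiniteExt_primaryComponent hdim hM
  induction i generalizing M with
  | zero => exact ⟨_, _, _, hT, ⟨.zero⟩⟩
  | succ i ih =>
    have exact_mkQ := LinearMap.exact_subtype_mkQ (primaryComponent M a)
    have hQ : HasFiniteExt a (M ⧸ primaryComponent M a) := fun j ↦
      .covariant₃ (injective_subtype _) (mkQ_surjective _) exact_mkQ (hM j) (hT (j + 1))
    obtain ⟨C, _, _, hC, shift⟩ :=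
      hQ.exists_extColimit_succ primaryComponent_quotient_primaryComponent
    obtain ⟨H, _, _, hH, ⟨L⟩⟩ := ih hC (hasFiniteExt_primaryComponent hdim hC)
    obtain ⟨L'⟩ := shift i H L
    exact ⟨H, _, _, hH, ⟨L'.ofPowerTorsionKernel (injective_subtype _) (mkQ_surjective _) exact_mkQ
      isPowerTorsion_primaryComponent⟩⟩

end FiniteModel

section LocalCohomology

open Limits Opposite

variable {R : Type u} [CommRing R] {a : Ideal R} {i : ℕ} {M : ModuleCat.{u} R} {H : Type u}
  [AddCommGroup H] [Module R H]

/-- The direct system `t ↦ Ext^i(R ⧸ a ^ t, M)` whose colimit is `H^i_a(M)`. -/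
noncomputable abbrev extSystem (a : Ideal R) (i : ℕ) (M : ModuleCat.{u} R) :
    ℕᵒᵖᵒᵖ ⥤ ModuleCat.{u} R :=
  localCohomology.diagram (localCohomology.idealPowersDiagram a) i ⋙ (evaluation _ _).obj M

/-- Local cohomology of `M` as a cocone over `extSystem`. -/
noncomputable abbrev localCohomologyCocone (a : Ideal R) (i : ℕ) (M : ModuleCat.{u} R) :
    Cocone (extSystem a i M) :=
  ((evaluation _ _).obj M).mapCocone
    (colimit.cocone (localCohomology.diagram (localCohomology.idealPowersDiagram a) i))

/-- Evaluation at `M` preserves colimits, so local cohomology is the colimit of `extSystem`. -/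
noncomputable def localCohomologyIsColimit (a : Ideal R) (i : ℕ) (M : ModuleCat.{u} R) :
    IsColimit (localCohomologyCocone a i M) :=
  isColimitOfPreserves _ (colimit.isColimit _)

lemma extEquiv_extSystem_map {t v : ℕᵒᵖᵒᵖ} (w : t ⟶ v) (α : (extSystem a i M).obj t) :
    extEquiv i (quotPow a v.unop.unop) M (((extSystem a i M).map w).hom α) =
      extTransition a (leOfHom w.unop.unop) M i (extEquiv i (quotPow a t.unop.unop) M α) :=
  extEquiv_naturality i (quotPowMap a (leOfHom w.unop.unop)) M α

namespace ExtColimit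

/-- A model of the colimit as a cocone over `extSystem`. -/
noncomputable def cocone (L : ExtColimit a i M H) : Cocone (extSystem a i M) where
  pt := ModuleCat.of R H
  ι :=
    { app t := ModuleCat.ofHom
        (L.ι t.unop.unop ∘ₗ (extEquiv i (quotPow a t.unop.unop) M).toLinearMap)
      naturality _ v w := ModuleCat.hom_ext <| LinearMap.ext fun α ↦
        congr(L.ι v.unop.unop $(extEquiv_extSystem_map w α)).trans (L.ι_extTransition _ _) }

/-- The comparison map from local cohomology to a model of the colimit. -/
noncomputable def desc (L : ExtColimit a i M H) : (localCohomology a i).obj M →ₗ[R] H :=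
  ((localCohomologyIsColimit a i M).desc L.cocone).hom

lemma desc_ι (L : ExtColimit a i M H) (t : ℕᵒᵖᵒᵖ) (α : (extSystem a i M).obj t) :
    L.desc (((localCohomologyCocone a i M).ι.app t).hom α) =
      L.ι t.unop.unop (extEquiv i (quotPow a t.unop.unop) M α) :=
  congr(($((localCohomologyIsColimit a i M).fac L.cocone t)).hom α)

lemma desc_injective (L : ExtColimit a i M H) : Function.Injective L.desc := by
  refine (injective_iff_map_eq_zero _).2 fun x hx ↦ ?_
  have : PreservesFilteredColimitsOfSize.{0, 0} (forget (ModuleCat.{u} R)) :=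
    preservesFilteredColimitsOfSize_shrink.{0, u, 0, u} _
  obtain ⟨t, α, rfl⟩ := Concrete.isColimit_exists_rep _ (localCohomologyIsColimit a i M) x
  obtain ⟨v, h, hv⟩ := L.exists_extTransition_eq_zero _ ((L.desc_ι t α).symm.trans hx)
  let w : t ⟶ op (op v) := (homOfLE h).op.op
  have map_eq_zero : ((extSystem a i M).map w).hom α = 0 :=
    (extEquiv i (quotPow a v) M).map_eq_zero_iff.1 ((extEquiv_extSystem_map w α).trans hv)
  exact congr(($((localCohomologyCocone a i M).w w)).hom α).symm.trans
    (congr(((localCohomologyCocone a i M).ι.app _).hom $map_eq_zero).trans (map_zero _))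

lemma desc_surjective (L : ExtColimit a i M H) : Function.Surjective L.desc := fun y ↦ by
  obtain ⟨t, α, rfl⟩ := L.exists_rep y
  exact ⟨_, (L.desc_ι (op (op t)) ((extEquiv i (quotPow a t) M).symm α)).trans
    congr(L.ι t $((extEquiv i (quotPow a t) M).apply_symm_apply α))⟩

/-- Every model of the colimit is isomorphic to local cohomology. -/
noncomputable def linearEquiv (L : ExtColimit a i M H) : (localCohomology a i).obj M ≃ₗ[R] H :=
  .ofBijective L.desc ⟨L.desc_injective, L.desc_surjective⟩

end ExtColimit

lemma IsPowerTorsion.support_subset (hH : IsPowerTorsion H a) :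
    Module.support R H ⊆ PrimeSpectrum.zeroLocus (a : Set R) := by
  intro p hp r hr
  obtain ⟨y, hy⟩ := Module.mem_support_iff_exists_annihilator.1 hp
  obtain ⟨n, hn⟩ := hH y
  exact p.2.mem_of_pow_mem n
    (hy ((Submodule.mem_annihilator_span_singleton _ _).2 (hn _ (Ideal.pow_mem_pow hr n))))

lemma hasFiniteExt_iff : HasFiniteExt a M ↔
    ∀ j, Module.Finite R (extModule R j (ModuleCat.of R (R ⧸ a)) M) :=
  forall_congr' fun j ↦ (Module.Finite.equiv_iff (extEquiv j (ModuleCat.of R (R ⧸ a)) M)).symm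

variable [IsNoetherianRing R]

lemma HasFiniteExt.of_le_radical {b : Ideal R} (hb : HasFiniteExt b M) (hba : b ≤ a.radical) :
    HasFiniteExt a M := fun _ ↦ by
  obtain ⟨n, hn⟩ := Ideal.exists_pow_le_of_le_radical_of_fg hba (IsNoetherian.noetherian b)
  exact .of_pow_le_annihilator (fun j _ ↦ hb j) (hn.trans a.annihilator_quotient.ge)

end LocalCohomology

end CofiniteLocalCohomology

open CofiniteLocalCohomology in
theorem stmt9_general [IsNoetherianRing R] (𝔞 𝔟 : Ideal R) (hrad : 𝔟 ≤ 𝔞.radical)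
    (hdim : ringKrullDim (R ⧸ 𝔞) ≤ 1) (M : ModuleCat.{u} R)
    (hM : ∀ i, Module.Finite R (extModule R i (ModuleCat.of R (R ⧸ 𝔟)) M)) :
    ∀ i : ℕ, IsCofinite R 𝔞 ((localCohomology 𝔞 i).obj M) := by
  intro i
  have finiteExt_M : HasFiniteExt 𝔞 M := (hasFiniteExt_iff.2 hM).of_le_radical hrad
  obtain ⟨H, _, _, finiteExt_H, ⟨L⟩⟩ := finiteExt_M.exists_extColimit hdim i
  refine ⟨(L.isPowerTorsion.of_injective L.linearEquiv L.linearEquiv.injective).support_subset, ?_⟩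
  exact hasFiniteExt_iff.1 fun j ↦ (finiteExt_H j).of_equiv_right L.linearEquiv.symm

theorem stmt9 [IsNoetherianRing R] (𝔞 𝔟 : Ideal R) (hrad : 𝔟 ≤ 𝔞.radical)
    (hdim : ringKrullDim (R ⧸ 𝔞) = 1) (M : ModuleCat.{u} R)
    (h : IsCofinite R 𝔟 M) :
    ∀ i : ℕ, IsCofinite R 𝔞 ((localCohomology 𝔞 i).obj M) :=
  stmt9_general R 𝔞 𝔟 hrad hdim.le M h.2
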